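/- arXiv:2403.08171 — 14 statements merged into one kernel-verified Lean document; each statement's English description precedes it below -/
import Mathlib

section
/- Let E be a real inner product space, X ⊆ E a convex set, and f : E → ℝ a function that is convex on X. Let x, p ∈ X and suppose p_x ∈ X is a proximal point of f at x over X, i.e., p_x minimizes y ↦ f(y) + (1/2)‖y − x‖² over X. Then ‖x − p_x‖² − ‖x − p‖² ≤ 2·f(p) − 2·f(p_x) − ‖p − p_x‖². -/
/-- Let `E` be a real inner product space, `X ⊆ E` a convex set, and
`f : E → ℝ` convex on `X`. Let `x, p ∈ X` and suppose `px ∈ X` is a proximal point of `f`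
at `x` over `X`, i.e. `px` minimizes `y ↦ f y + (1/2)‖y − x‖²` over `X`. Then
`‖x − px‖² − ‖x − p‖² ≤ 2 f p − 2 f px − ‖p − px‖²`. -/
theorem stmt_0 {E : Type*} [NormedAddCommGroup E] [InnerProductSpace ℝ E]
    {X : Set E} (hXconv : Convex ℝ X) {f : E → ℝ} (hf : ConvexOn ℝ X f)
    {x p px : E} (hx : x ∈ X) (hp : p ∈ X) (hpx : px ∈ X)
    (hmin : IsMinOn (fun y => f y + (1 / 2) * ‖y - x‖ ^ 2) X px) :
    ‖x - px‖ ^ 2 - ‖x - p‖ ^ 2 ≤ 2 * f p - 2 * f px - ‖p - px‖ ^ 2 := by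
  have key : ∀ t : ℝ, 0 < t → t ≤ 1 →
      0 ≤ (f p - f px + inner ℝ (px - x) (p - px)) + t * (‖p - px‖ ^ 2 / 2) := by
    intro t ht ht1
    have h1 := hf.2 hpx hp (sub_nonneg.2 ht1) ht.le (by ring)
    have hm := hXconv hpx hp (sub_nonneg.2 ht1) ht.le (by ring)
    have h2 := isMinOn_iff.1 hmin _ hm
    have e : (1 - t) • px + t • p - x = (px - x) + t • (p - px) := by module
    have e2 := norm_add_sq_real (px - x) (t • (p - px))
    rw [real_inner_smul_right, norm_smul, mul_pow, Real.norm_eq_abs, sq_abs] at e2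
    simp only [smul_eq_mul] at h1
    simp only [e, e2] at h2
    refine nonneg_of_mul_nonneg_right (a := t) ?_ ht
    nlinarith
  have hA : 0 ≤ f p - f px + inner ℝ (px - x) (p - px) := by
    by_contra hA
    push Not at hA
    generalize f p - f px + inner ℝ (px - x) (p - px) = A at *
    have hB : 0 ≤ ‖p - px‖ ^ 2 / 2 := by positivity
    generalize ‖p - px‖ ^ 2 / 2 = B at *
    have hBA : 0 < B - A := by linarith
    have h := key (-A / (B - A)) (div_pos (by linarith) hBA)
      ((div_le_one hBA).2 (by linarith))
    have h3 : A + -A / (B - A) * B = -(A ^ 2 / (B - A)) := by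
      field_simp
      ring
    have h4 : 0 < A ^ 2 / (B - A) := div_pos (by nlinarith) hBA
    linarith
  have e3 := norm_add_sq_real (px - x) (p - px)
  have e4 : (px - x) + (p - px) = p - x := by abel
  rw [e4] at e3
  rw [norm_sub_rev x px, norm_sub_rev x p]
  linarith
end

section
/- Let X ⊆ ℝ^d be a nonempty closed convex set, T ≥ 1, and let η_1 ≥ η_2 ≥ ⋯ ≥ η_T > 0 be non-increasing step sizes. For t = 1, …, T let ℓ^t : ℝ^d → ℝ be convex and differentiable. Let x^1 ∈ X and define online gradient descent iterates x^{t+1} = Π_X[x^t − η_t ∇ℓ^t(x^t)] for t = 1, …, T. Let f : ℝ^d → ℝ be convex on X and suppose for each t = 1, …, T there is a proximal point p^t ∈ X of f at x^t over X. Set D = max_{1 ≤ t ≤ T} ‖x^t − p^t‖ and B_f = max_{1 ≤ t ≤ T} f(p^t) − min_{1 ≤ t ≤ T} f(p^t). Then ∑_{t=1}^T ⟨∇ℓ^t(x^t), x^t − p^t⟩ ≤ (D² + 2B_f − ‖x^{T+1} − p^T‖²)/(2η_T) + ∑_{t=1}^T (η_t/2)‖∇ℓ^t(x^t)‖² − ∑_{t=1}^{T−1}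 (1/(2η_t))‖p^t − p^{t+1}‖². -/
open scoped InnerProductSpace

theorem aux_prox {E : Type*} [NormedAddCommGroup E] [InnerProductSpace ℝ E] {X : Set E}
    {f : E → ℝ} (hf : ConvexOn ℝ X f) {x p y : E} (hp : p ∈ X) (hy : y ∈ X)
    (hmin : ∀ z ∈ X, f p + (1 / 2) * ‖p - x‖ ^ 2 ≤ f z + (1 / 2) * ‖z - x‖ ^ 2) :
    2 * f p + ‖x - p‖ ^ 2 + ‖p - y‖ ^ 2 ≤ 2 * f y + ‖x - y‖ ^ 2 := by
  have key : ∀ s : ℝ, 0 < s → s ≤ 1 →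
      0 ≤ (f y - f p) + ⟪p - x, y - p⟫_ℝ + s * (‖y - p‖ ^ 2 / 2) := by
    intro s hs hs1
    have hz := hf.1 hp hy (sub_nonneg.2 hs1) hs.le (by ring)
    have h1 := hmin _ hz
    have h2 := hf.2 hp hy (sub_nonneg.2 hs1) hs.le (by ring)
    have e : (1 - s) • p + s • y - x = (p - x) + s • (y - p) := by module
    rw [e, norm_add_sq_real, inner_smul_right, norm_smul, mul_pow, Real.norm_eq_abs, sq_abs] at h1
    simp only [smul_eq_mul] at h2
    have : 0 ≤ s * ((f y - f p) + ⟪p - x, y - p⟫_ℝ + s * (‖y - p‖ ^ 2 / 2)) := by nlinarith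
    exact nonneg_of_mul_nonneg_right this hs
  have h0 : 0 ≤ (f y - f p) + ⟪p - x, y - p⟫_ℝ := by
    by_contra! hneg
    set A := (f y - f p) + ⟪p - x, y - p⟫_ℝ
    set C := ‖y - p‖ ^ 2 / 2
    have hC : 0 ≤ C := by positivity
    have hpos : 0 < C + -A := by linarith
    have := key (-A / (2 * (C + -A))) (div_pos (by linarith) (by linarith))
      (by rw [div_le_one (by linarith)]; linarith)
    have h3 : -A / (2 * (C + -A)) * C ≤ -A / 2 := by
      rw [div_mul_eq_mul_div, div_le_div_iff₀ (by linarith) (by norm_num)]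
      nlinarith
    linarith
  have e : y - x = (p - x) + (y - p) := by abel
  have h := norm_add_sq_real (p - x) (y - p)
  rw [← e] at h
  rw [norm_sub_rev x p, norm_sub_rev p y, norm_sub_rev x y]
  linarith

/-- Online gradient descent with non-increasing step sizes over a nonempty
closed convex set `X ⊆ ℝ^d`, against convex differentiable losses `ℓ^t` (with gradient `g t`),
satisfies the proximal regret bound for any `f` convex on `X`, where `p t` is a proximal point
of `f` at `x t` over `X`, `D = max_{1≤t≤T} ‖x t − p t‖` and
`B_f = max_{1≤t≤T} f (p t) − min_{1≤t≤T} f (p t)`. -/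
theorem stmt_2 {d : ℕ} {X : Set (EuclideanSpace ℝ (Fin d))}
    (hXne : X.Nonempty) (hXclosed : IsClosed X) (hXconv : Convex ℝ X)
    {T : ℕ} (hT : 1 ≤ T)
    {η : ℕ → ℝ} (hηpos : ∀ t ∈ Finset.Icc 1 T, 0 < η t)
    (hηmono : ∀ t ∈ Finset.Icc 1 (T - 1), η (t + 1) ≤ η t)
    {ℓ : ℕ → EuclideanSpace ℝ (Fin d) → ℝ}
    {g : ℕ → EuclideanSpace ℝ (Fin d) → EuclideanSpace ℝ (Fin d)}
    (hconv : ∀ t ∈ Finset.Icc 1 T, ConvexOn ℝ Set.univ (ℓ t))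
    (hgrad : ∀ t ∈ Finset.Icc 1 T, ∀ a, HasGradientAt (ℓ t) (g t a) a)
    (proj : EuclideanSpace ℝ (Fin d) → EuclideanSpace ℝ (Fin d))
    (hproj : ∀ z, proj z ∈ X ∧ ∀ y ∈ X, ‖proj z - z‖ ≤ ‖y - z‖)
    {x : ℕ → EuclideanSpace ℝ (Fin d)} (hx1 : x 1 ∈ X)
    (hstep : ∀ t ∈ Finset.Icc 1 T, x (t + 1) = proj (x t - η t • g t (x t)))
    {f : EuclideanSpace ℝ (Fin d) → ℝ} (hf : ConvexOn ℝ X f)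
    {p : ℕ → EuclideanSpace ℝ (Fin d)} (hpX : ∀ t ∈ Finset.Icc 1 T, p t ∈ X)
    (hpmin : ∀ t ∈ Finset.Icc 1 T,
      IsMinOn (fun y => f y + (1 / 2) * ‖y - x t‖ ^ 2) X (p t))
    {D Bf : ℝ}
    (hD : D = (Finset.Icc 1 T).sup' (Finset.nonempty_Icc.mpr hT) fun t => ‖x t - p t‖)
    (hBf : Bf = ((Finset.Icc 1 T).sup' (Finset.nonempty_Icc.mpr hT) fun t => f (p t))
      - (Finset.Icc 1 T).inf' (Finset.nonempty_Icc.mpr hT) fun t => f (p t)) :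
    ∑ t ∈ Finset.Icc 1 T, ⟪g t (x t), x t - p t⟫_ℝ
      ≤ (D ^ 2 + 2 * Bf - ‖x (T + 1) - p T‖ ^ 2) / (2 * η T)
        + ∑ t ∈ Finset.Icc 1 T, η t / 2 * ‖g t (x t)‖ ^ 2
        - ∑ t ∈ Finset.Icc 1 (T - 1), 1 / (2 * η t) * ‖p t - p (t + 1)‖ ^ 2 := by
  have hstep1 : ∀ t ∈ Finset.Icc 1 T, ⟪g t (x t), x t - p t⟫_ℝ
      ≤ (‖x t - p t‖ ^ 2 - ‖x (t + 1) - p t‖ ^ 2) / (2 * η t) + η t / 2 * ‖g t (x t)‖ ^ 2 := by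
    intro t ht
    have hη := hηpos t ht
    have hP := hproj (x t - η t • g t (x t))
    rw [← hstep t ht] at hP
    have h := aux_prox (f := fun _ => (0 : ℝ)) (convexOn_const 0 hXconv) hP.1 (hpX t ht)
      (x := x t - η t • g t (x t)) (by
        intro z hz
        have := pow_le_pow_left₀ (norm_nonneg _) (hP.2 z hz) 2
        linarith)
    have e : x t - η t • g t (x t) - p t = (x t - p t) - η t • g t (x t) := by abel
    rw [e, norm_sub_sq_real (x t - p t), inner_smul_right, norm_smul, mul_pow, Real.norm_eq_abs, sq_abs,
      real_inner_comm (g t (x t)) (x t - p t)] at h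
    have h4 := sq_nonneg ‖x t - η t • g t (x t) - x (t + 1)‖
    rw [div_add' _ _ _ (by positivity), le_div_iff₀ (by positivity)]
    nlinarith
  set m := (Finset.Icc 1 T).inf' (Finset.nonempty_Icc.mpr hT) fun t => f (p t) with hm
  have hm1 : ∀ t ∈ Finset.Icc 1 T, m ≤ f (p t) := fun t ht =>
    Finset.inf'_le (fun t => f (p t)) ht
  have hM : ∀ t ∈ Finset.Icc 1 T, ‖x t - p t‖ ^ 2 + 2 * (f (p t) - m) ≤ D ^ 2 + 2 * Bf := by
    intro t ht
    have h1 : ‖x t - p t‖ ≤ D := hD ▸ Finset.le_sup' (fun t => ‖x t - p t‖) ht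
    have h2 := Finset.le_sup' (fun t => f (p t)) ht
    have h3 := pow_le_pow_left₀ (norm_nonneg _) h1 2
    linarith
  set M := D ^ 2 + 2 * Bf with hMdef
  have main : ∀ n : ℕ, n + 1 ≤ T → ∑ t ∈ Finset.Icc 1 (n + 1), ⟪g t (x t), x t - p t⟫_ℝ
      ≤ (M - ‖x (n + 1 + 1) - p (n + 1)‖ ^ 2 - 2 * (f (p (n + 1)) - m)) / (2 * η (n + 1))
        + ∑ t ∈ Finset.Icc 1 (n + 1), η t / 2 * ‖g t (x t)‖ ^ 2
        - ∑ t ∈ Finset.Icc 1 n, 1 / (2 * η t) * ‖p t - p (t + 1)‖ ^ 2 := by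
    intro n
    induction n with
    | zero =>
      intro h
      have h1 : 1 ∈ Finset.Icc 1 T := by simp [hT]
      have h2 := hstep1 1 h1
      have hη := hηpos 1 h1
      have h3 := hM 1 h1
      have h4 : (‖x 1 - p 1‖ ^ 2 - ‖x (1 + 1) - p 1‖ ^ 2) / (2 * η 1)
        ≤ (M - ‖x (1 + 1) - p 1‖ ^ 2 - 2 * (f (p 1) - m)) / (2 * η 1) :=
        div_le_div_of_nonneg_right (by linarith) (by positivity)
      simp only [zero_add, Finset.Icc_self, Finset.sum_singleton]
      simp only [Finset.Icc_eq_empty (show ¬ (1 ≤ 0) by norm_num), Finset.sum_empty]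
      linarith
    | succ n ih =>
      intro h
      have ih := ih (by omega)
      have hk : n + 1 ∈ Finset.Icc 1 T := by simp; omega
      have hk' : n + 1 + 1 ∈ Finset.Icc 1 T := by simp; omega
      have h2 := hstep1 _ hk'
      have hη := hηpos _ hk
      have hη' := hηpos _ hk'
      have hmono := hηmono (n + 1) (by simp; omega)
      have h3 := hM _ hk'
      have hp := aux_prox hf (hpX _ hk') (hpX _ hk) (fun z hz => hpmin _ hk' hz)
      rw [norm_sub_rev (p (n + 1 + 1))] at hp
      rw [Finset.sum_Icc_succ_top (by omega : 1 ≤ n + 1 + 1),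
        Finset.sum_Icc_succ_top (by omega : 1 ≤ n + 1 + 1) (fun t => η t / 2 * ‖g t (x t)‖ ^ 2),
        Finset.sum_Icc_succ_top (by omega : 1 ≤ n + 1)
          (fun t => 1 / (2 * η t) * ‖p t - p (t + 1)‖ ^ 2)]
      set b := ‖x (n + 1 + 1) - p (n + 1 + 1)‖ ^ 2 + 2 * (f (p (n + 1 + 1)) - m) with hb
      have h5 : (M - ‖x (n + 1 + 1) - p (n + 1)‖ ^ 2 - 2 * (f (p (n + 1)) - m)) / (2 * η (n + 1))
          ≤ (M - b - ‖p (n + 1) - p (n + 1 + 1)‖ ^ 2) / (2 * η (n + 1)) :=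
        div_le_div_of_nonneg_right (by linarith) (by positivity)
      have h6 : (M - b) / (2 * η (n + 1)) ≤ (M - b) / (2 * η (n + 1 + 1)) :=
        div_le_div_of_nonneg_left (by linarith) (by positivity) (by linarith)
      have h7 : (M - ‖x (n + 1 + 1 + 1) - p (n + 1 + 1)‖ ^ 2 - 2 * (f (p (n + 1 + 1)) - m))
            / (2 * η (n + 1 + 1))
          = (M - b) / (2 * η (n + 1 + 1)) + (‖x (n + 1 + 1) - p (n + 1 + 1)‖ ^ 2
            - ‖x (n + 1 + 1 + 1) - p (n + 1 + 1)‖ ^ 2) / (2 * η (n + 1 + 1)) := by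
        rw [← add_div, hb]; congr 1; ring
      rw [sub_div (M - b)] at h5
      rw [h7, one_div_mul_eq_div]
      linarith
  obtain ⟨n, rfl⟩ : ∃ n, T = n + 1 := ⟨T - 1, by omega⟩
  have h := main n le_rfl
  have hl : n + 1 ∈ Finset.Icc 1 (n + 1) := by simp
  have hη := hηpos _ hl
  have h8 := hm1 _ hl
  have h9 : (M - ‖x (n + 1 + 1) - p (n + 1)‖ ^ 2 - 2 * (f (p (n + 1)) - m)) / (2 * η (n + 1))
      ≤ (M - ‖x (n + 1 + 1) - p (n + 1)‖ ^ 2) / (2 * η (n + 1)) :=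
    div_le_div_of_nonneg_right (by linarith) (by positivity)
  rw [Nat.add_sub_cancel]
  linarith
end

section
/- Let X ⊆ ℝ^d be a nonempty closed convex set, T ≥ 1, and let η_1 ≥ η_2 ≥ ⋯ ≥ η_T > 0 be non-increasing step sizes. For t = 1, …, T let ℓ^t : ℝ^d → ℝ be convex and differentiable. Let x^1 ∈ X and define online gradient descent iterates x^{t+1} = Π_X[x^t − η_t ∇ℓ^t(x^t)] for t = 1, …, T. Let f : ℝ^d → ℝ be differentiable with L-Lipschitz gradient for some L < 1, and suppose for each t = 1, …, T there is a proximal point p^t ∈ X of f at x^t over X. Set D = max_{1 ≤ t ≤ T} ‖x^t − p^t‖ and B_f = max_{1 ≤ t ≤ T} f(p^t) − min_{1 ≤ t ≤ T} f(p^t). Then ∑_{t=1}^T ⟨∇ℓ^t(x^t), x^t − p^t⟩ ≤ (D² + 2B_f − ‖x^{T+1} − p^T‖²)/(2η_T) + ∑_{t=1}^T (η_t/2)‖∇ℓ^t(x^t)‖². -/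
open scoped InnerProductSpace

lemma aux_proj {d : ℕ} {X : Set (EuclideanSpace ℝ (Fin d))} (hXconv : Convex ℝ X)
    (z w y : EuclideanSpace ℝ (Fin d)) (hw : w ∈ X) (hy : y ∈ X)
    (h : ∀ y ∈ X, ‖w - z‖ ≤ ‖y - z‖) : ‖w - y‖ ^ 2 ≤ ‖z - y‖ ^ 2 := by
  have h1 : ‖z - w‖ = ⨅ v : X, ‖z - v‖ := by
    have : Nonempty X := ⟨⟨w, hw⟩⟩
    apply le_antisymm
    · apply le_ciInf
      intro v
      rw [norm_sub_rev z w, norm_sub_rev z v]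
      exact h v v.2
    · exact ciInf_le (f := fun v : X => ‖z - v‖)
        ⟨0, by rintro _ ⟨v, rfl⟩; exact norm_nonneg _⟩ ⟨w, hw⟩
  have h2 := (norm_eq_iInf_iff_real_inner_le_zero hXconv hw).1 h1 y hy
  have e : z - y = (z - w) - (y - w) := by abel
  rw [e, norm_sub_sq_real (z - w), norm_sub_rev w y]
  nlinarith [sq_nonneg ‖z - w‖]

lemma aux_sum (T : ℕ) (η a c : ℕ → ℝ) (M : ℝ) (hT : 1 ≤ T)
    (hη : ∀ t ∈ Finset.Icc 1 T, 0 < η t)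
    (hmono : ∀ t ∈ Finset.Icc 1 (T - 1), η (t + 1) ≤ η t)
    (ha : ∀ t ∈ Finset.Icc 1 T, a t ≤ M)
    (hac : ∀ t ∈ Finset.Icc 1 (T - 1), a (t + 1) ≤ c t) :
    ∑ t ∈ Finset.Icc 1 T, (a t - c t) / (2 * η t) ≤ (M - c T) / (2 * η T) := by
  induction T, hT using Nat.le_induction with
  | base =>
    have := hη 1 (by simp)
    have := ha 1 (by simp)
    simp only [Finset.Icc_self, Finset.sum_singleton]
    gcongr
  | succ n hn ih =>
    rw [Finset.sum_Icc_succ_top (by omega)]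
    simp only [Finset.mem_Icc] at *
    have ih := ih (fun t ht => hη t (by omega)) (fun t ht => hmono t (by omega))
      (fun t ht => ha t (by omega)) (fun t ht => hac t (by omega))
    have p1 := hη n (by omega)
    have p2 := hη (n + 1) (by omega)
    have m := hmono n (by omega)
    have a1 := ha (n + 1) (by omega)
    have c1 := hac n (by omega)
    have s1 : (M - c n) / (2 * η n) ≤ (M - a (n + 1)) / (2 * η (n + 1)) := by
      apply div_le_div₀ <;> linarith
    have s2 : (M - a (n + 1)) / (2 * η (n + 1)) + (a (n + 1) - c (n + 1)) / (2 * η (n + 1))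
        = (M - c (n + 1)) / (2 * η (n + 1)) := by ring
    linarith

/-- Online gradient descent with non-increasing step sizes over a nonempty
closed convex set `X ⊆ ℝ^d`, against convex differentiable losses `ℓ^t` (with gradients `g t`),
satisfies the proximal regret bound for any differentiable `f` whose gradient `f'` is
`L`-Lipschitz with `L < 1`, where `p t` is a proximal point of `f` at `x t` over `X`,
`D = max_{1≤t≤T} ‖x t − p t‖` and `B_f = max_{1≤t≤T} f (p t) − min_{1≤t≤T} f (p t)`. -/
theorem stmt_3 {d : ℕ} {X : Set (EuclideanSpace ℝ (Fin d))}
    (hXne : X.Nonempty) (hXclosed : IsClosed X) (hXconv : Convex ℝ X)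
    {T : ℕ} (hT : 1 ≤ T)
    {η : ℕ → ℝ} (hηpos : ∀ t ∈ Finset.Icc 1 T, 0 < η t)
    (hηmono : ∀ t ∈ Finset.Icc 1 (T - 1), η (t + 1) ≤ η t)
    {ℓ : ℕ → EuclideanSpace ℝ (Fin d) → ℝ}
    {g : ℕ → EuclideanSpace ℝ (Fin d) → EuclideanSpace ℝ (Fin d)}
    (hconv : ∀ t ∈ Finset.Icc 1 T, ConvexOn ℝ Set.univ (ℓ t))
    (hgrad : ∀ t ∈ Finset.Icc 1 T, ∀ a, HasGradientAt (ℓ t) (g t a) a)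
    (proj : EuclideanSpace ℝ (Fin d) → EuclideanSpace ℝ (Fin d))
    (hproj : ∀ z, proj z ∈ X ∧ ∀ y ∈ X, ‖proj z - z‖ ≤ ‖y - z‖)
    {x : ℕ → EuclideanSpace ℝ (Fin d)} (hx1 : x 1 ∈ X)
    (hstep : ∀ t ∈ Finset.Icc 1 T, x (t + 1) = proj (x t - η t • g t (x t)))
    {f : EuclideanSpace ℝ (Fin d) → ℝ}
    {f' : EuclideanSpace ℝ (Fin d) → EuclideanSpace ℝ (Fin d)} {L : ℝ}
    (hfdiff : ∀ a, HasGradientAt f (f' a) a)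
    (hL : L < 1) (hfLip : ∀ a b, ‖f' a - f' b‖ ≤ L * ‖a - b‖)
    {p : ℕ → EuclideanSpace ℝ (Fin d)} (hpX : ∀ t ∈ Finset.Icc 1 T, p t ∈ X)
    (hpmin : ∀ t ∈ Finset.Icc 1 T,
      IsMinOn (fun y => f y + (1 / 2) * ‖y - x t‖ ^ 2) X (p t))
    {D Bf : ℝ}
    (hD : D = (Finset.Icc 1 T).sup' (Finset.nonempty_Icc.mpr hT) fun t => ‖x t - p t‖)
    (hBf : Bf = ((Finset.Icc 1 T).sup' (Finset.nonempty_Icc.mpr hT) fun t => f (p t))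
      - (Finset.Icc 1 T).inf' (Finset.nonempty_Icc.mpr hT) fun t => f (p t)) :
    ∑ t ∈ Finset.Icc 1 T, ⟪g t (x t), x t - p t⟫_ℝ
      ≤ (D ^ 2 + 2 * Bf - ‖x (T + 1) - p T‖ ^ 2) / (2 * η T)
        + ∑ t ∈ Finset.Icc 1 T, η t / 2 * ‖g t (x t)‖ ^ 2 := by
  have hDt : ∀ t ∈ Finset.Icc 1 T, ‖x t - p t‖ ≤ D := fun t ht => by
    rw [hD]; exact Finset.le_sup' (fun t => ‖x t - p t‖) ht
  set m := (Finset.Icc 1 T).inf' (Finset.nonempty_Icc.mpr hT) fun t => f (p t) with hm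
  have hft : ∀ t ∈ Finset.Icc 1 T, f (p t) - m ≤ Bf := fun t ht => by
    have := Finset.le_sup' (fun t => f (p t)) ht
    rw [hBf]; linarith
  have hmt : ∀ t ∈ Finset.Icc 1 T, m ≤ f (p t) := fun t ht =>
    Finset.inf'_le (fun t => f (p t)) ht
  have key := aux_sum T η (fun t => ‖x t - p t‖ ^ 2 + 2 * (f (p t) - m))
    (fun t => ‖x (t + 1) - p t‖ ^ 2 + 2 * (f (p t) - m)) (D ^ 2 + 2 * Bf) hT hηpos hηmono
    (fun t ht => by
      have h1 := hft t ht
      have h2 := pow_le_pow_left₀ (norm_nonneg _) (hDt t ht) 2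
      linarith)
    (fun t ht => by
      simp only [Finset.mem_Icc] at *
      have h1 := hpmin (t + 1) (by omega) (hpX t (by omega))
      simp only [Set.mem_ofPred_eq] at h1
      rw [norm_sub_rev (p (t + 1)), norm_sub_rev (p t)] at h1
      linarith)
  have hTm : T ∈ Finset.Icc 1 T := by simp [hT]
  have last : (D ^ 2 + 2 * Bf - (‖x (T + 1) - p T‖ ^ 2 + 2 * (f (p T) - m))) / (2 * η T)
      ≤ (D ^ 2 + 2 * Bf - ‖x (T + 1) - p T‖ ^ 2) / (2 * η T) := by
    have := hηpos T hTm
    have := hmt T hTm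
    gcongr
    linarith
  have step : ∑ t ∈ Finset.Icc 1 T, ⟪g t (x t), x t - p t⟫_ℝ ≤
      ∑ t ∈ Finset.Icc 1 T, (((‖x t - p t‖ ^ 2 + 2 * (f (p t) - m)) -
        (‖x (t + 1) - p t‖ ^ 2 + 2 * (f (p t) - m))) / (2 * η t)
        + η t / 2 * ‖g t (x t)‖ ^ 2) := by
    apply Finset.sum_le_sum
    intro t ht
    have hp := hηpos t ht
    have h1 := aux_proj hXconv (x t - η t • g t (x t)) (x (t + 1)) (p t)
      (by rw [hstep t ht]; exact (hproj _).1) (hpX t ht)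
      (by rw [hstep t ht]; exact (hproj _).2)
    have e : x t - η t • g t (x t) - p t = (x t - p t) - η t • g t (x t) := by abel
    rw [e, norm_sub_sq_real (x t - p t), real_inner_smul_right, norm_smul, mul_pow, Real.norm_eq_abs, sq_abs,
      real_inner_comm] at h1
    rw [← sub_le_iff_le_add, le_div_iff₀ (by positivity)]
    linarith
  rw [Finset.sum_add_distrib] at step
  linarith
end

section
/- Let X ⊆ ℝ^d be a nonempty closed convex set, T ≥ 1, and η > 0 a constant step size. For t = 1, …, T let ℓ^t : ℝ^d → ℝ be convex and differentiable. Let x^1 ∈ X and define online gradient descent iterates x^{t+1} = Π_X[x^t − η ∇ℓ^t(x^t)] for t = 1, …, T. Let f : ℝ^d → ℝ be convex on X and suppose for each t = 1, …, T there is a proximal point p^t ∈ X of f at x^t over X. Then ∑_{t=1}^T ⟨∇ℓ^t(x^t), x^t − p^t⟩ ≤ (‖x^1 − p^1‖² + 2(f(p^1) − f(p^T)) − ‖x^{T+1} − p^T‖²)/(2η) + ∑_{t=1}^T (η/2)‖∇ℓ^t(x^t)‖² − ∑_{t=1}^{T−1} (1/(2η))‖p^t − p^{t+1}‖². -/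
open scoped InnerProductSpace

lemma prox_ineq {E : Type*} [NormedAddCommGroup E] [InnerProductSpace ℝ E] {X : Set E}
    {f : E → ℝ} (hf : ConvexOn ℝ X f) {x p y : E} (hp : p ∈ X) (hy : y ∈ X)
    (hmin : ∀ w ∈ X, f p + (1 / 2) * ‖p - x‖ ^ 2 ≤ f w + (1 / 2) * ‖w - x‖ ^ 2) :
    f p + (1 / 2) * ‖p - x‖ ^ 2 + (1 / 2) * ‖y - p‖ ^ 2 ≤ f y + (1 / 2) * ‖y - x‖ ^ 2 := by
  have key : ∀ s : ℝ, 0 < s → s ≤ 1 →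
      0 ≤ (f y + (1 / 2) * ‖y - x‖ ^ 2) - (f p + (1 / 2) * ‖p - x‖ ^ 2)
        - (1 / 2) * ‖y - p‖ ^ 2 + s * ((1 / 2) * ‖y - p‖ ^ 2) := by
    intro s hs hs1
    have hw := hf.1 hp hy (sub_nonneg.2 hs1) hs.le (by ring)
    have h1 := hf.2 hp hy (sub_nonneg.2 hs1) hs.le (by ring)
    have h2 := hmin _ hw
    have h3 : ‖(1 - s) • p + s • y - x‖ ^ 2 =
        (1 - s) * ‖p - x‖ ^ 2 + s * ‖y - x‖ ^ 2 - s * (1 - s) * ‖y - p‖ ^ 2 := by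
      have e1 : (1 - s) • p + s • y - x = (p - x) + s • (y - p) := by module
      have e2 : y - x = (p - x) + (y - p) := by abel
      rw [e1, e2, norm_add_sq_real, norm_add_sq_real, inner_smul_right, norm_smul, mul_pow,
        Real.norm_eq_abs, sq_abs]
      ring
    rw [h3] at h2
    simp only [smul_eq_mul] at h1
    refine nonneg_of_mul_nonneg_right (?_ : 0 ≤ s * _) hs
    nlinarith
  by_contra hc
  push Not at hc
  set N := (1 / 2) * ‖y - p‖ ^ 2 with hN
  have hN0 : 0 ≤ N := by positivity
  set D := (f y + (1 / 2) * ‖y - x‖ ^ 2) - (f p + (1 / 2) * ‖p - x‖ ^ 2) - N with hD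
  have hD0 : D < 0 := by linarith
  have hpos : 0 < 2 * N - D := by linarith
  have := key (-D / (2 * N - D)) (div_pos (by linarith) hpos)
    ((div_le_one hpos).2 (by linarith))
  have h4 : D + -D / (2 * N - D) * N = D * (N - D) / (2 * N - D) := by
    field_simp
    ring
  rw [h4] at this
  have : D * (N - D) / (2 * N - D) < 0 :=
    div_neg_of_neg_of_pos (mul_neg_of_neg_of_pos hD0 (by linarith)) hpos
  linarith

/-- Online gradient descent with constant step size `η > 0` over a nonempty
closed convex set `X ⊆ ℝ^d`, against convex differentiable losses `ℓ^t` (with gradients `g t`),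
satisfies the proximal regret bound for any `f` convex on `X`, with the constants
`D = ‖x 1 − p 1‖` and `B_f = f (p 1) − f (p T)`, where `p t` is a proximal point of `f`
at `x t` over `X`. -/
theorem stmt_4 {d : ℕ} {X : Set (EuclideanSpace ℝ (Fin d))}
    (hXne : X.Nonempty) (hXclosed : IsClosed X) (hXconv : Convex ℝ X)
    {T : ℕ} (hT : 1 ≤ T) {η : ℝ} (hη : 0 < η)
    {ℓ : ℕ → EuclideanSpace ℝ (Fin d) → ℝ}
    {g : ℕ → EuclideanSpace ℝ (Fin d) → EuclideanSpace ℝ (Fin d)}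
    (hconv : ∀ t ∈ Finset.Icc 1 T, ConvexOn ℝ Set.univ (ℓ t))
    (hgrad : ∀ t ∈ Finset.Icc 1 T, ∀ a, HasGradientAt (ℓ t) (g t a) a)
    (proj : EuclideanSpace ℝ (Fin d) → EuclideanSpace ℝ (Fin d))
    (hproj : ∀ z, proj z ∈ X ∧ ∀ y ∈ X, ‖proj z - z‖ ≤ ‖y - z‖)
    {x : ℕ → EuclideanSpace ℝ (Fin d)} (hx1 : x 1 ∈ X)
    (hstep : ∀ t ∈ Finset.Icc 1 T, x (t + 1) = proj (x t - η • g t (x t)))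
    {f : EuclideanSpace ℝ (Fin d) → ℝ} (hf : ConvexOn ℝ X f)
    {p : ℕ → EuclideanSpace ℝ (Fin d)} (hpX : ∀ t ∈ Finset.Icc 1 T, p t ∈ X)
    (hpmin : ∀ t ∈ Finset.Icc 1 T,
      IsMinOn (fun y => f y + (1 / 2) * ‖y - x t‖ ^ 2) X (p t)) :
    ∑ t ∈ Finset.Icc 1 T, ⟪g t (x t), x t - p t⟫_ℝ
      ≤ (‖x 1 - p 1‖ ^ 2 + 2 * (f (p 1) - f (p T)) - ‖x (T + 1) - p T‖ ^ 2) / (2 * η)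
        + ∑ t ∈ Finset.Icc 1 T, η / 2 * ‖g t (x t)‖ ^ 2
        - ∑ t ∈ Finset.Icc 1 (T - 1), 1 / (2 * η) * ‖p t - p (t + 1)‖ ^ 2 := by
  have hA : ∀ t ∈ Finset.Icc 1 T, 2 * η * ⟪g t (x t), x t - p t⟫_ℝ ≤
      ‖x t - p t‖ ^ 2 - ‖x (t + 1) - p t‖ ^ 2 + η ^ 2 * ‖g t (x t)‖ ^ 2 := by
    intro t ht
    have h := prox_ineq (f := fun _ => (0 : ℝ)) (convexOn_const 0 hXconv)
      (x := x t - η • g t (x t)) (hproj (x t - η • g t (x t))).1 (hpX t ht) (by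
        intro w hw
        have := (hproj (x t - η • g t (x t))).2 w hw
        gcongr)
    rw [← hstep t ht] at h
    have e : p t - (x t - η • g t (x t)) = η • g t (x t) - (x t - p t) := by abel
    rw [e, norm_sub_sq_real (η • g t (x t)), inner_smul_left, norm_smul, mul_pow, Real.norm_eq_abs, sq_abs,
      norm_sub_rev (p t) (x (t + 1))] at h
    simp only [conj_trivial] at h
    nlinarith [sq_nonneg ‖x (t + 1) - (x t - η • g t (x t))‖]
  have hB : ∀ t, 1 ≤ t → t + 1 ≤ T → ‖x (t + 1) - p (t + 1)‖ ^ 2 - ‖x (t + 1) - p t‖ ^ 2 ≤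
      2 * (f (p t) - f (p (t + 1))) - ‖p t - p (t + 1)‖ ^ 2 := by
    intro t h1 h2
    have ht : t ∈ Finset.Icc 1 T := Finset.mem_Icc.2 ⟨h1, by omega⟩
    have ht' : t + 1 ∈ Finset.Icc 1 T := Finset.mem_Icc.2 ⟨by omega, h2⟩
    have h := prox_ineq hf (hpX _ ht') (hpX _ ht) (fun w hw => hpmin _ ht' hw)
    rw [norm_sub_rev (x (t + 1)) (p t), norm_sub_rev (x (t + 1)) (p (t + 1))]
    linarith
  have hC : ∀ n, 1 ≤ n → n ≤ T → 2 * η * ∑ t ∈ Finset.Icc 1 n, ⟪g t (x t), x t - p t⟫_ℝ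
      ≤ (‖x 1 - p 1‖ ^ 2 + 2 * (f (p 1) - f (p n)) - ‖x (n + 1) - p n‖ ^ 2)
        + η ^ 2 * ∑ t ∈ Finset.Icc 1 n, ‖g t (x t)‖ ^ 2
        - ∑ t ∈ Finset.Icc 1 (n - 1), ‖p t - p (t + 1)‖ ^ 2 := by
    intro n hn
    induction n, hn using Nat.le_induction with
    | base =>
      intro h
      have := hA 1 (Finset.mem_Icc.2 ⟨le_rfl, h⟩)
      simp at this ⊢
      linarith
    | succ n hn ih =>
      intro h
      have i := ih (by omega)
      have a := hA (n + 1) (Finset.mem_Icc.2 ⟨by omega, h⟩)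
      have b := hB n hn h
      obtain ⟨m, rfl⟩ : ∃ m, n = m + 1 := ⟨n - 1, by omega⟩
      simp only [Nat.add_sub_cancel] at i ⊢
      rw [Finset.sum_Icc_succ_top (by omega) (fun t => ⟪g t (x t), x t - p t⟫_ℝ),
        Finset.sum_Icc_succ_top (by omega) (fun t => ‖g t (x t)‖ ^ 2),
        Finset.sum_Icc_succ_top (by omega) (fun t => ‖p t - p (t + 1)‖ ^ 2)]
      rw [mul_add, mul_add]
      linarith
  have h := hC T hT le_rfl
  rw [← Finset.mul_sum, ← Finset.mul_sum]
  have h2 : (0 : ℝ) < 2 * η := by positivity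
  refine le_of_mul_le_mul_left (h.trans (le_of_eq ?_)) h2
  field_simp
end

section
/- Let A be a symmetric positive definite real d×d matrix, b ∈ ℝ^d, and X ⊆ ℝ^d a convex set such that Ax + b ∈ X for every x ∈ X. Suppose that either (i) I − A is positive semidefinite (all eigenvalues of A are at most 1), or (ii) 2A − I is positive definite (all eigenvalues of A exceed 1/2). Define f : ℝ^d → ℝ by f(y) = (1/2)⟨y, (A⁻¹ − I)y⟩ − ⟨A⁻¹b, y⟩. Then for every x ∈ X, the point Ax + b is the unique minimizer over X of the map y ↦ f(y) + (1/2)‖y − x‖²; that is, the symmetric affine endomorphism φ(x) = Ax + b equals the proximal map prox_f on X. -/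
open scoped InnerProductSpace

/-- Let `A` be a symmetric positive definite real `d×d` matrix, `b ∈ ℝ^d`,
and `X ⊆ ℝ^d` a convex set with `A x + b ∈ X` for every `x ∈ X`. If either `I − A` is
positive semidefinite or `2A − I` is positive definite, then with
`f y = (1/2)⟪y, (A⁻¹ − I) y⟫ − ⟪A⁻¹ b, y⟫`, for every `x ∈ X` the point `A x + b` is the
unique minimizer over `X` of `y ↦ f y + (1/2)‖y − x‖²`, i.e. `φ(x) = A x + b` is `prox_f` on
`X`. -/
theorem stmt_5 {d : ℕ} {A : Matrix (Fin d) (Fin d) ℝ}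
    (hAsymm : A.IsSymm) (hApd : A.PosDef)
    {b : EuclideanSpace ℝ (Fin d)} {X : Set (EuclideanSpace ℝ (Fin d))}
    (hXconv : Convex ℝ X)
    (hmaps : ∀ x ∈ X, Matrix.toEuclideanLin A x + b ∈ X)
    (hcond : (1 - A).PosSemidef ∨ (2 • A - 1).PosDef)
    (f : EuclideanSpace ℝ (Fin d) → ℝ)
    (hfdef : f = fun y =>
      (1 / 2) * ⟪y, Matrix.toEuclideanLin (A⁻¹ - 1) y⟫_ℝ
        - ⟪Matrix.toEuclideanLin A⁻¹ b, y⟫_ℝ) :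
    ∀ x ∈ X,
      IsMinOn (fun y => f y + (1 / 2) * ‖y - x‖ ^ 2) X (Matrix.toEuclideanLin A x + b) ∧
      ∀ y ∈ X, IsMinOn (fun y' => f y' + (1 / 2) * ‖y' - x‖ ^ 2) X y →
        y = Matrix.toEuclideanLin A x + b := by
  intro x hx
  have hdet : IsUnit A.det := (Matrix.isUnit_iff_isUnit_det A).1 hApd.isUnit
  have hBpd : (A⁻¹).PosDef := hApd.inv
  have hsym : ∀ u v, ⟪Matrix.toEuclideanLin A⁻¹ u, v⟫_ℝ = ⟪u, Matrix.toEuclideanLin A⁻¹ v⟫_ℝ :=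
    Matrix.isSymmetric_toEuclideanLin_iff.2 hBpd.isHermitian
  have hBA : Matrix.toEuclideanLin A⁻¹ (Matrix.toEuclideanLin A x) = x := by
    ext i
    simp [Matrix.toLpLin_apply, Matrix.mulVec_mulVec, Matrix.nonsing_inv_mul A hdet]
  have hpos : ∀ u : EuclideanSpace ℝ (Fin d), u ≠ 0 →
      0 < ⟪u, Matrix.toEuclideanLin A⁻¹ u⟫_ℝ := by
    intro u hu
    have h := hBpd.dotProduct_mulVec_pos (x := u.ofLp) (by simpa using hu)
    rw [EuclideanSpace.inner_eq_star_dotProduct, dotProduct_comm]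
    simpa [Matrix.toLpLin_apply] using h
  have hsub : ∀ y, Matrix.toEuclideanLin (A⁻¹ - 1) y = Matrix.toEuclideanLin A⁻¹ y - y := by
    intro y
    ext i
    simp [Matrix.toLpLin_apply, Matrix.sub_mulVec]
  set p := Matrix.toEuclideanLin A x + b with hp
  have hBp : Matrix.toEuclideanLin A⁻¹ p = x + Matrix.toEuclideanLin A⁻¹ b := by
    rw [hp, map_add, hBA]
  have hBb : Matrix.toEuclideanLin A⁻¹ b = Matrix.toEuclideanLin A⁻¹ p - x := by
    rw [hBp]; abel
  have key : ∀ y, f y + (1 / 2) * ‖y - x‖ ^ 2 = f p + (1 / 2) * ‖p - x‖ ^ 2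
      + (1 / 2) * ⟪y - p, Matrix.toEuclideanLin A⁻¹ (y - p)⟫_ℝ := by
    intro y
    have h1 := hsym p y
    have h2 := hsym p p
    have h3 := real_inner_comm y (Matrix.toEuclideanLin A⁻¹ p)
    have h4 := real_inner_comm x y
    have h5 := real_inner_comm x p
    simp only [hfdef, hsub, hBb]
    simp only [← real_inner_self_eq_norm_sq, inner_sub_left, inner_sub_right,
      map_sub]
    linarith
  refine ⟨fun y _ => ?_, fun y hy hmin => ?_⟩
  · show f p + (1 / 2) * ‖p - x‖ ^ 2 ≤ f y + (1 / 2) * ‖y - x‖ ^ 2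
    rw [key y]
    by_cases h : y - p = 0
    · simp [h]
    · linarith [hpos _ h]
  · by_contra hne
    have h := hpos _ (sub_ne_zero.2 hne)
    have h' : f y + (1 / 2) * ‖y - x‖ ^ 2 ≤ f p + (1 / 2) * ‖p - x‖ ^ 2 := hmin (hmaps x hx)
    rw [key y] at h'
    linarith
end

section
/- Let E be a finite-dimensional real normed space, X ⊆ E a convex set, and φ : E → ℝ a differentiable function that is 1-strongly convex on X with respect to the norm, i.e., φ(t·x + (1−t)·y) ≤ t·φ(x) + (1−t)·φ(y) − (t(1−t)/2)‖x − y‖² for all x, y ∈ X and t ∈ [0,1]. Define the Bregman divergence D_φ(x|y) = φ(x) − φ(y) − Dφ(y)(x − y), where Dφ(y) is the derivative of φ at y. Let G, η > 0, T ≥ 1, and for t = 1, …, T let ℓ^t : E → ℝ be convex and differentiable with ‖Dℓ^t(x^t)‖ ≤ G in the dual (operator) norm. Let x^1 ∈ X and for each t = 1, …, T let the mirror descent iterate x^{t+1} ∈ X minimize x ↦ η·Dℓ^t(x^t)(x) + D_φ(x|x^t) over X. Let f : E → ℝ be convex on X and for each t = 1, …, T+1 let p^t ∈ X minimize x ↦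 f(x) + D_φ(x|x^t) over X. Then ∑_{t=1}^T Dℓ^t(x^t)(x^t − p^t) ≤ (D_φ(p^1|x^1) + f(p^1) − f(p^{T+1}))/η + ηG²T/2. -/
/-- The Bregman divergence `D_φ(x|y) = φ(x) − φ(y) − Dφ(y)(x − y)` of a differentiable
function `φ`, where `Dφ(y)` is the Fréchet derivative of `φ` at `y`. -/
noncomputable def bregman {E : Type*} [NormedAddCommGroup E] [NormedSpace ℝ E]
    (φ : E → ℝ) (x y : E) : ℝ :=
  φ x - φ y - fderiv ℝ φ y (x - y)

theorem aux_min {E : Type*} [NormedAddCommGroup E] [NormedSpace ℝ E]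
    {X : Set E} (hX : Convex ℝ X) {F : E → ℝ} {F' : E →L[ℝ] ℝ} {a b : E} (ha : a ∈ X) (hb : b ∈ X)
    (hF : HasFDerivAt F F' a) (hm : IsMinOn F X a) : 0 ≤ F' (b - a) :=
  hm.localize.hasFDerivWithinAt_nonneg hF.hasFDerivWithinAt
    (sub_mem_posTangentConeAt_of_segment_subset (hX.segment_subset ha hb))

theorem aux_sc {E : Type*} [NormedAddCommGroup E] [NormedSpace ℝ E]
    {X : Set E} {φ : E → ℝ} (hφdiff : Differentiable ℝ φ)
    (hφsc : ∀ x ∈ X, ∀ y ∈ X, ∀ t : ℝ, 0 ≤ t → t ≤ 1 →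
      φ (t • x + (1 - t) • y)
        ≤ t * φ x + (1 - t) * φ y - t * (1 - t) / 2 * ‖x - y‖ ^ 2)
    {u v : E} (hu : u ∈ X) (hv : v ∈ X) : ‖u - v‖ ^ 2 / 2 ≤ bregman φ u v := by
  have h1 : HasDerivAt (fun t : ℝ => v + t • (u - v)) (u - v) 0 := by
    simpa using ((hasDerivAt_id (0 : ℝ)).smul_const (u - v)).const_add v
  have h2 : HasDerivAt (fun t : ℝ => φ (v + t • (u - v))) (fderiv ℝ φ v (u - v)) 0 := by
    have h3 : HasFDerivAt φ (fderiv ℝ φ v) (v + (0 : ℝ) • (u - v)) := by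
      simpa using (hφdiff v).hasFDerivAt
    exact h3.comp_hasDerivAt (0 : ℝ) h1
  have h4 : HasDerivAt (fun t : ℝ => t * (φ u - φ v) - t * (1 - t) / 2 * ‖u - v‖ ^ 2)
      (φ u - φ v - ‖u - v‖ ^ 2 / 2) 0 := by
    have hi := hasDerivAt_id (0 : ℝ)
    have := (hi.mul_const (φ u - φ v)).sub
      (((hi.mul (hi.const_sub 1)).div_const 2).mul_const (‖u - v‖ ^ 2))
    refine this.congr_deriv ?_
    simp
    ring
  have h5 := (h4.sub h2).hasFDerivAt
  have h6 := aux_min (convex_Icc (0 : ℝ) 1) (a := 0) (b := 1) (by simp) (by simp) h5 (by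
    intro t ht
    have := hφsc u hu v hv t ht.1 ht.2
    have e : t • u + (1 - t) • v = v + t • (u - v) := by module
    rw [e] at this
    simp
    linarith)
  simp at h6
  unfold bregman
  rw [map_sub]
  linarith

theorem aux_step {E : Type*} [NormedAddCommGroup E] [NormedSpace ℝ E]
    {X : Set E} (hX : Convex ℝ X) {φ : E → ℝ} (hφdiff : Differentiable ℝ φ)
    (hφsc : ∀ x ∈ X, ∀ y ∈ X, ∀ t : ℝ, 0 ≤ t → t ≤ 1 →
      φ (t • x + (1 - t) • y)
        ≤ t * φ x + (1 - t) * φ y - t * (1 - t) / 2 * ‖x - y‖ ^ 2)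
    {G η : ℝ} (hη : 0 < η) {g : E →L[ℝ] ℝ} (hg : ‖g‖ ≤ G) {x y p : E}
    (hx : x ∈ X) (hy : y ∈ X) (hp : p ∈ X)
    (hm : IsMinOn (fun z => η * g z + bregman φ z x) X y) :
    η * g (x - p) ≤ bregman φ p x - bregman φ p y + η ^ 2 * G ^ 2 / 2 := by
  have hF : HasFDerivAt (fun z => η * g z + bregman φ z x)
      (η • g + (fderiv ℝ φ y - fderiv ℝ φ x)) y := by
    unfold bregman
    refine (g.hasFDerivAt.const_mul η).add
      (((hφdiff y).hasFDerivAt.sub_const (φ x)).sub ?_)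
    exact (fderiv ℝ φ x).hasFDerivAt.comp y ((hasFDerivAt_id y).sub_const x)
  have h1 := aux_min hX hy hp hF hm
  have h2 := aux_sc hφdiff hφsc hy hx
  have h3 : g (x - y) ≤ G * ‖y - x‖ := by
    rw [norm_sub_rev]
    exact (le_abs_self _).trans ((g.le_opNorm _).trans (by gcongr))
  have h4 : η * g (x - y) ≤ η * (G * ‖y - x‖) := by gcongr
  unfold bregman at *
  simp only [ContinuousLinearMap.add_apply, ContinuousLinearMap.sub_apply,
    ContinuousLinearMap.smul_apply, smul_eq_mul, map_sub] at *
  nlinarith [sq_nonneg (η * G - ‖y - x‖)]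

/-- Mirror descent with a differentiable distance-generating function `φ`
that is 1-strongly convex on a convex set `X` in a finite-dimensional real normed space,
run with step size `η > 0` against convex differentiable losses `ℓ^t` whose derivatives at
the iterates have dual norm at most `G`, satisfies the Bregman proximal regret bound: with
`p t` minimizing `z ↦ f z + D_φ(z|x t)` over `X` for a function `f` convex on `X`,
`∑_{t=1}^T Dℓ^t(x^t)(x^t − p^t) ≤ (D_φ(p¹|x¹) + f(p¹) − f(p^{T+1}))/η + ηG²T/2`. -/
theorem stmt_8 {E : Type*} [NormedAddCommGroup E] [NormedSpace ℝ E]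
    [FiniteDimensional ℝ E]
    {X : Set E} (hXconv : Convex ℝ X)
    {φ : E → ℝ} (hφdiff : Differentiable ℝ φ)
    (hφsc : ∀ x ∈ X, ∀ y ∈ X, ∀ t : ℝ, 0 ≤ t → t ≤ 1 →
      φ (t • x + (1 - t) • y)
        ≤ t * φ x + (1 - t) * φ y - t * (1 - t) / 2 * ‖x - y‖ ^ 2)
    {G η : ℝ} (hG : 0 < G) (hη : 0 < η) {T : ℕ} (hT : 1 ≤ T)
    {ℓ : ℕ → E → ℝ}
    (hconv : ∀ t ∈ Finset.Icc 1 T, ConvexOn ℝ Set.univ (ℓ t))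
    (hdiff : ∀ t ∈ Finset.Icc 1 T, Differentiable ℝ (ℓ t))
    {x : ℕ → E} (hx1 : x 1 ∈ X)
    (hGbound : ∀ t ∈ Finset.Icc 1 T, ‖fderiv ℝ (ℓ t) (x t)‖ ≤ G)
    (hstep : ∀ t ∈ Finset.Icc 1 T, x (t + 1) ∈ X ∧
      IsMinOn (fun z => η * fderiv ℝ (ℓ t) (x t) z + bregman φ z (x t)) X (x (t + 1)))
    {f : E → ℝ} (hf : ConvexOn ℝ X f)
    {p : ℕ → E}
    (hp : ∀ t ∈ Finset.Icc 1 (T + 1), p t ∈ X ∧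
      IsMinOn (fun z => f z + bregman φ z (x t)) X (p t)) :
    ∑ t ∈ Finset.Icc 1 T, fderiv ℝ (ℓ t) (x t) (x t - p t)
      ≤ (bregman φ (p 1) (x 1) + f (p 1) - f (p (T + 1))) / η
        + η * G ^ 2 * T / 2 := by
  have hxX : ∀ t ∈ Finset.Icc 1 (T + 1), x t ∈ X := by
    intro t ht
    rw [Finset.mem_Icc] at ht
    obtain h | h := eq_or_lt_of_le ht.1
    · rw [← h]; exact hx1
    · obtain ⟨s, rfl⟩ : ∃ s, t = s + 1 := ⟨t - 1, by omega⟩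
      exact (hstep s (Finset.mem_Icc.2 ⟨by omega, by omega⟩)).1
  have key : ∀ n ≤ T, η * ∑ t ∈ Finset.Icc 1 n, fderiv ℝ (ℓ t) (x t) (x t - p t)
      ≤ (f (p 1) + bregman φ (p 1) (x 1)) - (f (p (n + 1)) + bregman φ (p (n + 1)) (x (n + 1)))
        + n * (η ^ 2 * G ^ 2 / 2) := by
    intro n
    induction n with
    | zero => intro _; simp
    | succ n ih =>
      intro hn
      have h0 := ih (by omega)
      have m1 : n + 1 ∈ Finset.Icc 1 T := Finset.mem_Icc.2 ⟨by omega, by omega⟩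
      have m2 : n + 1 ∈ Finset.Icc 1 (T + 1) := Finset.mem_Icc.2 ⟨by omega, by omega⟩
      have m3 : n + 1 + 1 ∈ Finset.Icc 1 (T + 1) := Finset.mem_Icc.2 ⟨by omega, by omega⟩
      have h1 := aux_step hXconv hφdiff hφsc hη (hGbound _ m1) (hxX _ m2) (hstep _ m1).1
        (hp _ m2).1 (hstep _ m1).2
      have h2 := isMinOn_iff.1 (hp _ m3).2 _ (hp _ m2).1
      rw [Finset.sum_Icc_succ_top (by omega), mul_add]
      push_cast
      linarith
  have hk := key T le_rfl
  have mT : T + 1 ∈ Finset.Icc 1 (T + 1) := Finset.mem_Icc.2 ⟨by omega, le_rfl⟩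
  have hn := aux_sc hφdiff hφsc (hp _ mT).1 (hxX _ mT)
  have hn' : 0 ≤ bregman φ (p (T + 1)) (x (T + 1)) := le_trans (by positivity) hn
  have e : (bregman φ (p 1) (x 1) + f (p 1) - f (p (T + 1))) / η + η * G ^ 2 * T / 2
      = (bregman φ (p 1) (x 1) + f (p 1) - f (p (T + 1)) + T * (η ^ 2 * G ^ 2 / 2)) / η := by
    field_simp
  rw [e, le_div_iff₀ hη]
  linarith
end

section
/- Let X ⊆ ℝ^d be a nonempty compact convex set with diameter D > 0, let G > 0, T ≥ 1, and 0 < δ ≤ D. For t = 1, …, T let ℓ^t : ℝ^d → ℝ be convex and differentiable with ‖∇ℓ^t(x)‖ ≤ G for all x ∈ X. Let x^1 ∈ X and define online gradient descent iterates x^{t+1} = Π_X[x^t − η ∇ℓ^t(x^t)] with constant step size η = D/(G√T). Then for every x* ∈ X and every λ with 0 ≤ λ ≤ δ/D, ∑_{t=1}^T ( ℓ^t(x^t) − ℓ^t((1−λ)x^t + λx*) ) ≤ 2δG√T. -/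
theorem aux_grad {E : Type*} [NormedAddCommGroup E] [InnerProductSpace ℝ E] [CompleteSpace E]
    {f : E → ℝ} {v a : E} (hf : ConvexOn ℝ Set.univ f) (hg : HasGradientAt f v a) (b : E) :
    f a - f b ≤ inner ℝ v (a - b) := by
  have hc : ConvexOn ℝ Set.univ (fun s : ℝ => f (AffineMap.lineMap a b s)) := by
    have := hf.comp_affineMap (AffineMap.lineMap a b : ℝ →ᵃ[ℝ] E)
    rw [Set.preimage_univ] at this
    exact this
  have hd : HasDerivAt (fun s : ℝ => f (AffineMap.lineMap a b s)) (inner ℝ v (b - a)) 0 := by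
    have h1 : HasDerivAt (fun s : ℝ => (AffineMap.lineMap a b s : E)) (b - a) 0 :=
      AffineMap.hasDerivAt_lineMap
    have h2 : HasFDerivAt f (InnerProductSpace.toDual ℝ E v) (AffineMap.lineMap a b (0:ℝ)) := by
      simpa using hg.hasFDerivAt
    have h3 := h2.comp_hasDerivAt (0:ℝ) h1
    rw [InnerProductSpace.toDual_apply_apply] at h3
    exact h3
  have h := hc.le_slope_of_hasDerivAt (Set.mem_univ 0) (Set.mem_univ 1) zero_lt_one hd
  simp [slope_def_field] at h
  have e : inner ℝ v (a - b) = - inner ℝ v (b - a) := by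
    rw [← inner_neg_right, neg_sub]
  linarith

theorem aux_proj_s10 {E : Type*} [NormedAddCommGroup E] [InnerProductSpace ℝ E]
    {X : Set E} (hX : Convex ℝ X) {z p : E} (hp : p ∈ X) (h : ∀ y ∈ X, ‖p - z‖ ≤ ‖y - z‖)
    {y : E} (hy : y ∈ X) : ‖p - y‖ ^ 2 ≤ ‖z - y‖ ^ 2 := by
  have hinf : ‖z - p‖ = ⨅ w : X, ‖z - w‖ := by
    have : Nonempty X := ⟨⟨p, hp⟩⟩
    apply le_antisymm
    · apply le_ciInf
      intro w
      rw [norm_sub_rev z p, norm_sub_rev z w]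
      exact h w w.2
    · exact ciInf_le ⟨0, by rintro _ ⟨w, rfl⟩; exact norm_nonneg _⟩ (⟨p, hp⟩ : X)
  have h1 := (norm_eq_iInf_iff_real_inner_le_zero hX hp).1 hinf y hy
  have h2 : z - y = (z - p) - (y - p) := by abel
  rw [h2, norm_sub_sq_real (z - p), norm_sub_rev p y]
  nlinarith [sq_nonneg ‖z - p‖]

/-- Online gradient descent over a nonempty compact convex set
`X ⊆ ℝ^d` of diameter `D > 0`, with constant step size `η = D/(G√T)`, against convex
differentiable losses with gradients bounded by `G` on `X`, has
`Φ_int(δ)`-regret at most `2δG√T`: for every `x* ∈ X` and every `λ ∈ [0, δ/D]`,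
`∑_{t=1}^T (ℓ^t(x^t) − ℓ^t((1−λ)x^t + λx*)) ≤ 2δG√T`. -/
theorem stmt_10 {d : ℕ} {X : Set (EuclideanSpace ℝ (Fin d))}
    (hXne : X.Nonempty) (hXcomp : IsCompact X) (hXconv : Convex ℝ X)
    (hDpos : 0 < Metric.diam X)
    {G : ℝ} (hG : 0 < G) {T : ℕ} (hT : 1 ≤ T)
    {δ : ℝ} (hδ0 : 0 < δ) (hδD : δ ≤ Metric.diam X)
    {ℓ : ℕ → EuclideanSpace ℝ (Fin d) → ℝ}
    {g : ℕ → EuclideanSpace ℝ (Fin d) → EuclideanSpace ℝ (Fin d)}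
    (hconv : ∀ t ∈ Finset.Icc 1 T, ConvexOn ℝ Set.univ (ℓ t))
    (hgrad : ∀ t ∈ Finset.Icc 1 T, ∀ a, HasGradientAt (ℓ t) (g t a) a)
    (hGb : ∀ t ∈ Finset.Icc 1 T, ∀ y ∈ X, ‖g t y‖ ≤ G)
    (proj : EuclideanSpace ℝ (Fin d) → EuclideanSpace ℝ (Fin d))
    (hproj : ∀ z, proj z ∈ X ∧ ∀ y ∈ X, ‖proj z - z‖ ≤ ‖y - z‖)
    {x : ℕ → EuclideanSpace ℝ (Fin d)} (hx1 : x 1 ∈ X)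
    (hstep : ∀ t ∈ Finset.Icc 1 T,
      x (t + 1) = proj (x t - (Metric.diam X / (G * Real.sqrt T)) • g t (x t)))
    {xstar : EuclideanSpace ℝ (Fin d)} (hxstar : xstar ∈ X)
    {lam : ℝ} (hlam0 : 0 ≤ lam) (hlam : lam ≤ δ / Metric.diam X) :
    ∑ t ∈ Finset.Icc 1 T, (ℓ t (x t) - ℓ t ((1 - lam) • x t + lam • xstar))
      ≤ 2 * δ * G * Real.sqrt T := by
  set D := Metric.diam X with hD
  have hTpos : (0:ℝ) < T := by exact_mod_cast hT
  have hs : 0 < Real.sqrt T := Real.sqrt_pos.2 hTpos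
  have hss : Real.sqrt T * Real.sqrt T = T := Real.mul_self_sqrt hTpos.le
  set η := D / (G * Real.sqrt T) with hη
  have hη0 : 0 < η := by positivity
  have hηG : η * (G * Real.sqrt T) = D := by
    rw [hη]; field_simp
  have key : ∀ n : ℕ, n ≤ T → x (n + 1) ∈ X ∧ ‖x (n + 1) - xstar‖ ^ 2 +
      2 * η * ∑ t ∈ Finset.Icc 1 n, inner ℝ (g t (x t)) (x t - xstar)
        ≤ D ^ 2 + n * (η ^ 2 * G ^ 2) := by
    intro n
    induction n with
    | zero =>
      intro _
      refine ⟨hx1, ?_⟩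
      have h := Metric.dist_le_diam_of_mem hXcomp.isBounded hx1 hxstar
      rw [dist_eq_norm] at h
      have := pow_le_pow_left₀ (norm_nonneg _) h 2
      simpa using this
    | succ n ih =>
      intro hn
      obtain ⟨hm, hi⟩ := ih (by omega)
      have ht : n + 1 ∈ Finset.Icc 1 T := Finset.mem_Icc.2 ⟨by omega, hn⟩
      have hst := hstep (n + 1) ht
      have hb := hGb (n + 1) ht _ hm
      have hp := hproj (x (n + 1) - η • g (n + 1) (x (n + 1)))
      have hpr := aux_proj_s10 hXconv hp.1 hp.2 hxstar
      rw [← hst] at hpr hp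
      refine ⟨hp.1, ?_⟩
      rw [Finset.sum_Icc_succ_top (by omega)]
      have e : x (n + 1) - η • g (n + 1) (x (n + 1)) - xstar
          = (x (n + 1) - xstar) - η • g (n + 1) (x (n + 1)) := by abel
      rw [e, norm_sub_sq_real (x (n + 1) - xstar), inner_smul_right, real_inner_comm, norm_smul, mul_pow,
        Real.norm_eq_abs, sq_abs] at hpr
      have hb2 : ‖g (n + 1) (x (n + 1))‖ ^ 2 ≤ G ^ 2 :=
        pow_le_pow_left₀ (norm_nonneg _) hb 2
      have hb3 := mul_le_mul_of_nonneg_left hb2 (sq_nonneg η)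
      push_cast
      linarith
  have hS : ∑ t ∈ Finset.Icc 1 T, inner ℝ (g t (x t)) (x t - xstar) ≤ D * (G * Real.sqrt T) := by
    have h := (key T le_rfl).2
    have e : (T:ℝ) * (η ^ 2 * G ^ 2) = D ^ 2 := by
      rw [← hηG, mul_pow, mul_pow, pow_two (Real.sqrt T), hss]; ring
    rw [e] at h
    have h3 : η * ∑ t ∈ Finset.Icc 1 T, inner ℝ (g t (x t)) (x t - xstar)
        ≤ η * (D * (G * Real.sqrt T)) := by
      have : η * (D * (G * Real.sqrt T)) = D ^ 2 := by
        rw [mul_left_comm, hηG]; ring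
      rw [this]
      nlinarith [sq_nonneg ‖x (T + 1) - xstar‖]
    exact le_of_mul_le_mul_left h3 hη0
  have h1 : ∑ t ∈ Finset.Icc 1 T, (ℓ t (x t) - ℓ t ((1 - lam) • x t + lam • xstar))
      ≤ lam * ∑ t ∈ Finset.Icc 1 T, inner ℝ (g t (x t)) (x t - xstar) := by
    rw [Finset.mul_sum]
    apply Finset.sum_le_sum
    intro t ht
    have h := aux_grad (hconv t ht) (hgrad t ht (x t)) ((1 - lam) • x t + lam • xstar)
    have e : x t - ((1 - lam) • x t + lam • xstar) = lam • (x t - xstar) := by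
      module
    rwa [e, inner_smul_right] at h
  have hl : lam * D ≤ δ := (le_div_iff₀ hDpos).1 hlam
  have hGs : 0 < G * Real.sqrt T := by positivity
  calc _ ≤ lam * (D * (G * Real.sqrt T)) := h1.trans (mul_le_mul_of_nonneg_left hS hlam0)
    _ = (lam * D) * (G * Real.sqrt T) := by ring
    _ ≤ δ * (G * Real.sqrt T) := mul_le_mul_of_nonneg_right hl hGs.le
    _ ≤ 2 * δ * G * Real.sqrt T := by nlinarith [mul_pos hδ0 hGs]
end

section
/- Let G be a simple graph on d ≥ 3 vertices with adjacency matrix A and clique number ω(G), let X = {x ∈ ℝ^d : x_i ≥ 0 for all i and ∑_i x_i ≤ 1}, and for an integer k with 1 ≤ k ≤ d define f_k(x) = xᵀAx − (1 − 1/k)(∑_i x_i)². Then: (i) −1 ≤ f_k(x) ≤ 1 for every x ∈ X; and (ii) if k > ω(G), then f_k(x) ≤ 0 for every x ∈ X. -/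
/-- The feasible set `X = {x ∈ ℝ^d : x_i ≥ 0 ∀i, ∑_i x_i ≤ 1}`. -/
def stdCorner (d : ℕ) : Set (EuclideanSpace ℝ (Fin d)) :=
  {x | (∀ i, 0 ≤ x i) ∧ ∑ i, x i ≤ 1}

/-- The function `f_k(x) = xᵀ A x − (1 − 1/k)(∑_i x_i)²`, where `A` is the adjacency
matrix of the graph `G`. -/
noncomputable def fkFun {d : ℕ} (G : SimpleGraph (Fin d)) [DecidableRel G.Adj] (k : ℕ)
    (x : EuclideanSpace ℝ (Fin d)) : ℝ :=
  (∑ i, ∑ j, SimpleGraph.adjMatrix ℝ G i j * x i * x j)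
    - (1 - 1 / (k : ℝ)) * (∑ i, x i) ^ 2

open Matrix in
theorem ms_aux {d : ℕ} (G : SimpleGraph (Fin d)) [DecidableRel G.Adj]
    {k : ℕ} (hk1 : 1 ≤ k) (hc : G.cliqueNum ≤ k) (n : ℕ) :
    ∀ x : Fin d → ℝ, (∀ i, 0 ≤ x i) → (Finset.univ.filter (fun i => x i ≠ 0)).card ≤ n →
      x ⬝ᵥ (G.adjMatrix ℝ *ᵥ x) ≤ (1 - 1 / (k : ℝ)) * (∑ i, x i) ^ 2 := by
  have hk : (0 : ℝ) < k := by exact_mod_cast hk1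
  induction n with
  | zero =>
    intro x hx h
    have h0 : x = 0 := by
      ext i
      by_contra hi
      have : i ∈ (Finset.univ.filter (fun i => x i ≠ 0)) := by simpa using hi
      rw [Finset.card_eq_zero.mp (Nat.le_zero.mp h)] at this
      simp at this
    simp [h0]
  | succ n ih =>
    intro x hx h
    by_cases hcl : G.IsClique (Finset.univ.filter (fun i => x i ≠ 0) : Finset (Fin d))
    · have hm := hcl.card_le_cliqueNum.trans hc
      set S := Finset.univ.filter (fun i => x i ≠ 0) with hS
      have hsum : ∑ i ∈ S, x i = ∑ i, x i := by
        apply Finset.sum_subset (Finset.subset_univ _)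
        intro i _ hi
        simpa [hS] using hi
      have hsq : ∑ i ∈ S, x i ^ 2 = ∑ i, x i ^ 2 := by
        apply Finset.sum_subset (Finset.subset_univ _)
        intro i _ hi
        have : x i = 0 := by simpa [hS] using hi
        simp [this]
      have hcs : (∑ i, x i) ^ 2 ≤ k * ∑ i, x i ^ 2 := by
        have h1 := sq_sum_le_card_mul_sum_sq (s := S) (f := x)
        rw [hsum, hsq] at h1
        refine h1.trans ?_
        have : (S.card : ℝ) ≤ k := by exact_mod_cast hm
        have h2 : 0 ≤ ∑ i, x i ^ 2 := Finset.sum_nonneg fun i _ => sq_nonneg _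
        gcongr
      have hq : x ⬝ᵥ (G.adjMatrix ℝ *ᵥ x) ≤ (∑ i, x i) ^ 2 - ∑ i, x i ^ 2 := by
        have : (∑ i, x i) ^ 2 - ∑ i, x i ^ 2
            = ∑ i, ∑ j, (x i * x j - if i = j then x i * x j else 0) := by
          simp [Finset.sum_sub_distrib, sq, Finset.sum_mul_sum]
        rw [this]
        simp only [dotProduct, mulVec, Finset.mul_sum]
        apply Finset.sum_le_sum; intro i _
        apply Finset.sum_le_sum; intro j _
        have := mul_nonneg (hx i) (hx j)
        by_cases hij : i = j
        · subst hij; simp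
        · by_cases ha : G.Adj i j <;> simp [ha, hij, this]
      have : (∑ i, x i) ^ 2 / k ≤ ∑ i, x i ^ 2 := by
        rw [div_le_iff₀ hk]; linarith
      have e : (1 - 1 / (k : ℝ)) * (∑ i, x i) ^ 2 = (∑ i, x i) ^ 2 - (∑ i, x i) ^ 2 / k := by
        ring
      rw [e]; linarith
    · have : ∃ u v, x u ≠ 0 ∧ x v ≠ 0 ∧ u ≠ v ∧ ¬ G.Adj u v ∧
          (G.adjMatrix ℝ *ᵥ x) v ≤ (G.adjMatrix ℝ *ᵥ x) u := by
        simp only [SimpleGraph.IsClique, Set.Pairwise] at hcl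
        push Not at hcl
        obtain ⟨u, hu, v, hv, huv, ha⟩ := hcl
        simp at hu hv
        rcases le_total ((G.adjMatrix ℝ *ᵥ x) v) ((G.adjMatrix ℝ *ᵥ x) u) with h | h
        · exact ⟨u, v, hu, hv, huv, ha, h⟩
        · exact ⟨v, u, hv, hu, huv.symm, fun h => ha h.symm, h⟩
      obtain ⟨u, v, hu, hv, huv, ha, hle⟩ := this
      have ha' : ¬ G.Adj v u := fun h => ha h.symm
      set w : Fin d → ℝ := Pi.single u (x v) - Pi.single v (x v) with hw
      have hwi : ∀ i, w i = (if i = u then x v else 0) - (if i = v then x v else 0) := by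
        intro i; simp [hw, Pi.single_apply]
      have hws : ∑ i, w i = 0 := by simp [hwi, Finset.sum_sub_distrib]
      have hww : w ⬝ᵥ (G.adjMatrix ℝ *ᵥ w) = 0 := by
        simp [hw, mulVec_sub, sub_dotProduct, ha, ha']
      have hwx : w ⬝ᵥ (G.adjMatrix ℝ *ᵥ x)
          = x v * ((G.adjMatrix ℝ *ᵥ x) u - (G.adjMatrix ℝ *ᵥ x) v) := by
        simp only [hw, sub_dotProduct, single_dotProduct]; ring
      have hxw : x ⬝ᵥ (G.adjMatrix ℝ *ᵥ w) = w ⬝ᵥ (G.adjMatrix ℝ *ᵥ x) := by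
        rw [dotProduct_mulVec, ← mulVec_transpose, SimpleGraph.transpose_adjMatrix,
          dotProduct_comm]
      have hpos : 0 ≤ w ⬝ᵥ (G.adjMatrix ℝ *ᵥ x) := by
        rw [hwx]; exact mul_nonneg (hx v) (by linarith)
      have key := ih (x + w) ?_ ?_
      · rw [mulVec_add, add_dotProduct, dotProduct_add, dotProduct_add, hww, hxw] at key
        simp only [Pi.add_apply, Finset.sum_add_distrib, hws, add_zero] at key
        linarith
      · intro i
        simp only [Pi.add_apply, hwi]
        have := hx i
        have := hx v
        by_cases h1 : i = u
        · have : i ≠ v := by rw [h1]; exact huv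
          simp [h1, huv]; linarith [hx u]
        · by_cases h2 : i = v
          · subst h2; simp [h1]
          · simp [h1, h2, hx i]
      · apply Nat.le_of_lt_succ
        refine lt_of_lt_of_le (Finset.card_lt_card ?_) h
        rw [Finset.ssubset_iff_of_subset]
        · exact ⟨v, by simpa using hv, by simp [hwi, huv.symm]⟩
        · intro i
          simp only [Finset.mem_filter, Finset.mem_univ, true_and, Pi.add_apply, hwi]
          intro h1 h2
          apply h1
          have h3 : i ≠ u := by rintro rfl; exact hu h2
          have h4 : i ≠ v := by rintro rfl; exact hv h2
          simp [h2, h3, h4]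

/-- For a simple graph `G` on `d ≥ 3` vertices with clique number `ω(G)`,
and `1 ≤ k ≤ d`: (i) `−1 ≤ f_k(x) ≤ 1` on `X`; (ii) if `k > ω(G)` then `f_k(x) ≤ 0` on `X`. -/
theorem stmt_13 {d : ℕ} (hd : 3 ≤ d) (G : SimpleGraph (Fin d)) [DecidableRel G.Adj]
    {k : ℕ} (hk1 : 1 ≤ k) (hkd : k ≤ d) :
    (∀ x ∈ stdCorner d, -1 ≤ fkFun G k x ∧ fkFun G k x ≤ 1) ∧
      (G.cliqueNum < k → ∀ x ∈ stdCorner d, fkFun G k x ≤ 0) := by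
  have hk : (1 : ℝ) ≤ k := by exact_mod_cast hk1
  have hk0 : (0 : ℝ) ≤ 1 / (k : ℝ) := by positivity
  have hk2 : 1 / (k : ℝ) ≤ 1 := by rw [div_le_one (by linarith)]; exact hk
  refine ⟨fun x hx => ?_, fun hc x hx => ?_⟩
  · obtain ⟨hx0, hx1⟩ := hx
    have hs0 : 0 ≤ ∑ i, x i := Finset.sum_nonneg fun i _ => hx0 i
    have hs2 : (∑ i, x i) ^ 2 ≤ 1 := by nlinarith
    have hs3 : 0 ≤ (∑ i, x i) ^ 2 := sq_nonneg _
    have hq0 : 0 ≤ ∑ i, ∑ j, SimpleGraph.adjMatrix ℝ G i j * x i * x j := by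
      refine Finset.sum_nonneg fun i _ => Finset.sum_nonneg fun j _ => ?_
      have := mul_nonneg (hx0 i) (hx0 j)
      by_cases ha : G.Adj i j <;> simp [ha, this]
    have hq1 : ∑ i, ∑ j, SimpleGraph.adjMatrix ℝ G i j * x i * x j ≤ (∑ i, x i) ^ 2 := by
      rw [sq, Finset.sum_mul_sum]
      refine Finset.sum_le_sum fun i _ => Finset.sum_le_sum fun j _ => ?_
      have := mul_nonneg (hx0 i) (hx0 j)
      by_cases ha : G.Adj i j <;> simp [ha, this]
    unfold fkFun
    constructor <;> nlinarith
  · have := ms_aux G hk1 hc.le _ (fun i => x i) hx.1 le_rfl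
    unfold fkFun
    have e : ∑ i, ∑ j, SimpleGraph.adjMatrix ℝ G i j * x i * x j
        = (fun i => x i) ⬝ᵥ (Matrix.mulVec (G.adjMatrix ℝ) (fun i => x i)) := by
      simp only [dotProduct, Matrix.mulVec, Finset.mul_sum]
      refine Finset.sum_congr rfl fun i _ => Finset.sum_congr rfl fun j _ => ?_
      ring
    rw [e]; linarith
end

section
/- Let G be a simple graph on d ≥ 3 vertices with adjacency matrix A and clique number ω(G), let X = {x ∈ ℝ^d : x_i ≥ 0 for all i and ∑_i x_i ≤ 1}, and for an integer k with 1 ≤ k ≤ d define f_k(x) = xᵀAx − (1 − 1/k)(∑_i x_i)². For every δ ∈ (0,1] and every integer k with ω(G) + 1 ≤ k ≤ d, every x ∈ X with ∑_i x_i ≥ δ/2 is not a (δ²/(8d²), δ)-local maximizer of f_k over X; that is, there exists x′ ∈ X with ‖x′ − x‖₂ ≤ δ and f_k(x′) > f_k(x) + δ²/(8d²). -/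
theorem aux_ms {d : ℕ} (G : SimpleGraph (Fin d)) [DecidableRel G.Adj] (n : ℕ) :
    ∀ x : Fin d → ℝ, (∀ i, 0 ≤ x i) → (Finset.univ.filter (fun i => x i ≠ 0)).card ≤ n →
      (∑ i, x i) ^ 2 ≤ (G.cliqueNum : ℝ) *
        ((∑ i, x i) ^ 2 - ∑ i, ∑ j, SimpleGraph.adjMatrix ℝ G i j * x i * x j) := by
  induction n with
  | zero =>
    intro x hx hc
    have h0 : ∀ i, x i = 0 := by
      intro i
      by_contra h
      have : i ∈ Finset.univ.filter (fun i => x i ≠ 0) := by simp [h]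
      rw [Finset.card_eq_zero.mp (Nat.le_zero.mp hc)] at this
      simp at this
    simp [h0]
  | succ n ih =>
    intro x hx hc
    by_cases hcl : G.IsClique (Finset.univ.filter (fun i => x i ≠ 0) : Finset (Fin d))
    · have hw : (Finset.univ.filter (fun i => x i ≠ 0)).card ≤ G.cliqueNum :=
        hcl.card_le_cliqueNum
      have hQ : (∑ i, x i) ^ 2 - ∑ i, ∑ j, SimpleGraph.adjMatrix ℝ G i j * x i * x j
          = ∑ i, x i ^ 2 := by
        rw [sq, Finset.sum_mul_sum, ← Finset.sum_sub_distrib]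
        refine Finset.sum_congr rfl fun i _ => ?_
        rw [← Finset.sum_sub_distrib, Finset.sum_eq_single i]
        · simp [sq]
        · intro j _ hji
          by_cases hi : x i = 0
          · simp [hi]
          by_cases hj : x j = 0
          · simp [hj]
          have : G.Adj i j := hcl (by simp [hi]) (by simp [hj]) (Ne.symm hji)
          simp [SimpleGraph.adjMatrix_apply, this]
        · simp
      rw [hQ]
      have h1 := sq_sum_le_card_mul_sum_sq (s := Finset.univ.filter (fun i => x i ≠ 0)) (f := x)
      rw [Finset.sum_filter_ne_zero] at h1
      refine h1.trans ?_
      have h2 : ∑ i ∈ Finset.univ.filter (fun i => x i ≠ 0), x i ^ 2 ≤ ∑ i, x i ^ 2 :=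
        Finset.sum_le_sum_of_subset_of_nonneg (Finset.filter_subset _ _)
          (fun i _ _ => sq_nonneg _)
      have h3 : (((Finset.univ.filter (fun i => x i ≠ 0)).card : ℕ) : ℝ) ≤ G.cliqueNum := by
        exact_mod_cast hw
      exact mul_le_mul h3 h2 (Finset.sum_nonneg fun i _ => sq_nonneg _) (by positivity)
    · have key : ∃ i j, i ≠ j ∧ x i ≠ 0 ∧ x j ≠ 0 ∧ ¬ G.Adj i j ∧
          ∑ l, SimpleGraph.adjMatrix ℝ G j l * x l ≤ ∑ l, SimpleGraph.adjMatrix ℝ G i l * x l := by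
        have : ∃ i j, i ≠ j ∧ x i ≠ 0 ∧ x j ≠ 0 ∧ ¬ G.Adj i j := by
          by_contra hno
          apply hcl
          intro i hi j hj hij
          by_contra hadj
          exact hno ⟨i, j, hij, by simpa using hi, by simpa using hj, hadj⟩
        obtain ⟨i, j, hij, hi, hj, ha⟩ := this
        rcases le_total (∑ l, SimpleGraph.adjMatrix ℝ G j l * x l)
          (∑ l, SimpleGraph.adjMatrix ℝ G i l * x l) with h | h
        · exact ⟨i, j, hij, hi, hj, ha, h⟩
        · exact ⟨j, i, hij.symm, hj, hi, fun h' => ha h'.symm, h⟩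
      obtain ⟨i, j, hij, hi, hj, ha, hle⟩ := key
      have ha' : ¬ G.Adj j i := fun h => ha h.symm
      let e : Fin d → ℝ := fun l => (if l = i then 1 else 0) - (if l = j then 1 else 0)
      let y : Fin d → ℝ := fun l => x l + x j * e l
      have hy0 : ∀ l, 0 ≤ y l := by
        intro l
        simp only [y, e]
        have := hx l
        have := hx j
        by_cases h1 : l = i
        · subst h1; simp [hij]; linarith
        · by_cases h2 : l = j
          · subst h2; simp [h1]
          · simp [h1, h2]; linarith
      have hyc : (Finset.univ.filter (fun i => y i ≠ 0)).card ≤ n := by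
        have : (Finset.univ.filter (fun i => y i ≠ 0)) ⊂
            (Finset.univ.filter (fun i => x i ≠ 0)) := by
          rw [Finset.ssubset_iff_of_subset]
          · refine ⟨j, by simp [hj], ?_⟩
            simp [y, e, hij.symm]
          · intro l hl
            simp only [Finset.mem_filter, Finset.mem_univ, true_and] at hl ⊢
            intro h
            apply hl
            have h1 : l ≠ i := by rintro rfl; exact hi h
            have h2 : l ≠ j := by rintro rfl; exact hj h
            simp [y, e, h1, h2, h]
        have := Finset.card_lt_card this
        omega
      have hys : ∑ l, y l = ∑ l, x l := by
        simp [y, e, Finset.sum_add_distrib, ← Finset.mul_sum]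
      have hyQ : ∑ l, ∑ m, SimpleGraph.adjMatrix ℝ G l m * y l * y m =
          (∑ l, ∑ m, SimpleGraph.adjMatrix ℝ G l m * x l * x m) +
          2 * x j * (∑ l, SimpleGraph.adjMatrix ℝ G i l * x l -
            ∑ l, SimpleGraph.adjMatrix ℝ G j l * x l) := by
        have e1 : ∑ l, ∑ m, SimpleGraph.adjMatrix ℝ G l m * e l * x m =
            ∑ l, SimpleGraph.adjMatrix ℝ G i l * x l -
            ∑ l, SimpleGraph.adjMatrix ℝ G j l * x l := by
          have : ∀ l, ∑ m, SimpleGraph.adjMatrix ℝ G l m * e l * x m =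
              e l * ∑ m, SimpleGraph.adjMatrix ℝ G l m * x m := by
            intro l
            rw [Finset.mul_sum]
            exact Finset.sum_congr rfl fun m _ => by ring
          simp only [this, e, sub_mul, Finset.sum_sub_distrib, ite_mul, one_mul, zero_mul,
            Finset.sum_ite_eq', Finset.mem_univ, if_true]
        have e2 : ∑ l, ∑ m, SimpleGraph.adjMatrix ℝ G l m * x l * e m =
            ∑ l, ∑ m, SimpleGraph.adjMatrix ℝ G l m * e l * x m := by
          rw [Finset.sum_comm]
          refine Finset.sum_congr rfl fun l _ => Finset.sum_congr rfl fun m _ => ?_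
          simp only [SimpleGraph.adjMatrix_apply, G.adj_comm m l]
          ring
        have e3 : ∑ l, ∑ m, SimpleGraph.adjMatrix ℝ G l m * e l * e m = 0 := by
          refine Finset.sum_eq_zero fun l _ => Finset.sum_eq_zero fun m _ => ?_
          have he : ∀ l, l ≠ i → l ≠ j → e l = 0 := by
            intro l h1 h2
            simp [e, h1, h2]
          have hz : (l = i ∨ l = j) → (m = i ∨ m = j) →
              SimpleGraph.adjMatrix ℝ G l m = 0 := by
            rintro (rfl | rfl) (rfl | rfl)
            · simp
            · simp [ha]
            · simp [ha']
            · simp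
          by_cases h1 : l = i ∨ l = j
          · by_cases h2 : m = i ∨ m = j
            · rw [hz h1 h2]; ring
            · push Not at h2
              rw [he m h2.1 h2.2]; ring
          · push Not at h1
            rw [he l h1.1 h1.2]; ring
        have : ∑ l, ∑ m, SimpleGraph.adjMatrix ℝ G l m * y l * y m =
          (∑ l, ∑ m, SimpleGraph.adjMatrix ℝ G l m * x l * x m) +
          x j * (∑ l, ∑ m, SimpleGraph.adjMatrix ℝ G l m * e l * x m) +
          x j * (∑ l, ∑ m, SimpleGraph.adjMatrix ℝ G l m * x l * e m) +
          x j ^ 2 * (∑ l, ∑ m, SimpleGraph.adjMatrix ℝ G l m * e l * e m) := by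
          simp only [Finset.mul_sum, ← Finset.sum_add_distrib]
          refine Finset.sum_congr rfl fun l _ => Finset.sum_congr rfl fun m _ => ?_
          simp only [y]
          ring
        rw [this, e2, e3, e1]
        ring
      have := ih y hy0 hyc
      rw [hys, hyQ] at this
      refine this.trans (mul_le_mul_of_nonneg_left ?_ (by positivity))
      have := mul_nonneg (hx j) (sub_nonneg.mpr hle)
      linarith

/-- For every `δ ∈ (0,1]` and every integer `k` with
`ω(G) + 1 ≤ k ≤ d`, every `x ∈ X` with `∑_i x_i ≥ δ/2` is not a
`(δ²/(8d²), δ)`-local maximizer of `f_k` over `X`: there is `x′ ∈ X` with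
`‖x′ − x‖₂ ≤ δ` and `f_k(x′) > f_k(x) + δ²/(8d²)`. -/
theorem stmt_14 {d : ℕ} (hd : 3 ≤ d) (G : SimpleGraph (Fin d)) [DecidableRel G.Adj]
    {δ : ℝ} (hδ0 : 0 < δ) (hδ1 : δ ≤ 1)
    {k : ℕ} (hk : G.cliqueNum + 1 ≤ k) (hkd : k ≤ d)
    {x : EuclideanSpace ℝ (Fin d)} (hx : x ∈ stdCorner d)
    (hxbig : δ / 2 ≤ ∑ i, x i) :
    ∃ x' ∈ stdCorner d, ‖x' - x‖ ≤ δ ∧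
      fkFun G k x + δ ^ 2 / (8 * (d : ℝ) ^ 2) < fkFun G k x' := by
  obtain ⟨hx0, hx1⟩ := hx
  have hms := aux_ms G d (fun i => x i) hx0 (by
    simpa using Finset.card_le_univ (Finset.univ.filter (fun i => x i ≠ 0)))
  have hscale : ∀ c : ℝ, fkFun G k (c • x) = c ^ 2 * fkFun G k x := by
    intro c
    have h1 : ∑ i, (c • x) i = c * ∑ i, x i := by simp [Finset.mul_sum]
    have h2 : ∑ i, ∑ j, SimpleGraph.adjMatrix ℝ G i j * (c • x) i * (c • x) j =
        c ^ 2 * ∑ i, ∑ j, SimpleGraph.adjMatrix ℝ G i j * x i * x j := by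
      simp only [Finset.mul_sum, PiLp.smul_apply, smul_eq_mul]
      exact Finset.sum_congr rfl fun i _ => Finset.sum_congr rfl fun j _ => by ring
    unfold fkFun
    rw [h1, h2]
    ring
  have hnorm : ‖x‖ ≤ ∑ i, x i := by
    rw [EuclideanSpace.norm_eq]
    refine Real.sqrt_le_iff.mpr ⟨Finset.sum_nonneg fun i _ => hx0 i, ?_⟩
    simp only [Real.norm_eq_abs, sq_abs]
    exact Finset.sum_sq_le_sq_sum_of_nonneg fun i _ => hx0 i
  have hf : (∑ i, x i) ^ 2 ≤ (d : ℝ) ^ 2 * (- fkFun G k x) := by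
    unfold fkFun
    generalize (∑ i, ∑ j, SimpleGraph.adjMatrix ℝ G i j * x i * x j) = Q at *
    generalize (∑ i, x i) = s at *
    have hs : 0 < s := by linarith
    have hw : (G.cliqueNum : ℝ) + 1 ≤ k := by exact_mod_cast hk
    have hkd' : (k : ℝ) ≤ d := by exact_mod_cast hkd
    have hw0 : (0 : ℝ) ≤ G.cliqueNum := by positivity
    generalize (G.cliqueNum : ℝ) = w at *
    have hk0 : (0 : ℝ) < k := by linarith
    have hP : 0 < s ^ 2 - Q := by
      by_contra hP
      push Not at hP
      nlinarith [mul_nonneg hw0 (neg_nonneg.mpr hP), pow_pos hs 2]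
    have h1 : s ^ 2 + (s ^ 2 - Q) ≤ k * (s ^ 2 - Q) := by nlinarith
    have h2 : s ^ 2 ≤ (k : ℝ) ^ 2 * (-(Q - (1 - 1 / (k : ℝ)) * s ^ 2)) := by
      have : (k : ℝ) ^ 2 * (-(Q - (1 - 1 / (k : ℝ)) * s ^ 2)) =
          k * (k * (s ^ 2 - Q)) - k * s ^ 2 := by
        field_simp
        ring
      rw [this]
      nlinarith [mul_le_mul_of_nonneg_left h1 hk0.le, sq_nonneg s]
    have h3 : 0 ≤ -(Q - (1 - 1 / (k : ℝ)) * s ^ 2) := by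
      by_contra h
      push Not at h
      nlinarith [mul_pos (pow_pos hk0 2) (neg_pos.mpr h), pow_pos hs 2]
    refine h2.trans (mul_le_mul_of_nonneg_right ?_ h3)
    gcongr
  clear hms
  have hsum : ∀ c : ℝ, ∑ i, (c • x) i = c * ∑ i, x i := by
    intro c; simp [Finset.mul_sum]
  have hs : 0 < ∑ i, x i := by linarith
  have hd0 : (0 : ℝ) < d := by
    have : 0 < d := by omega
    exact_mod_cast this
  obtain ⟨t, ht⟩ : ∃ t, t * ∑ i, x i = δ / 2 := ⟨δ / 2 / ∑ i, x i, by field_simp⟩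
  have ht0 : 0 ≤ t := by
    by_contra h
    push Not at h
    nlinarith
  have ht1 : t ≤ 1 := by
    by_contra h
    push Not at h
    nlinarith
  refine ⟨(1 - t) • x, ⟨fun i => ?_, ?_⟩, ?_, ?_⟩
  · simpa using mul_nonneg (sub_nonneg.mpr ht1) (hx0 i)
  · rw [hsum]
    nlinarith
  · have : (1 - t) • x - x = (-t) • x := by module
    rw [this, norm_smul, Real.norm_eq_abs, abs_neg, abs_of_nonneg ht0]
    nlinarith [mul_le_mul_of_nonneg_left hnorm ht0]
  · rw [hscale, ← sub_pos]
    generalize fkFun G k x = F at *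
    generalize ∑ i, x i = s at *
    have h1 : δ ^ 2 / 4 ≤ (2 * t - t ^ 2) * s ^ 2 := by
      have : (2 * t - t ^ 2) * s ^ 2 = 2 * (t * s) * s - (t * s) ^ 2 := by ring
      rw [this, ht]
      nlinarith
    have h2 : 0 ≤ 2 * t - t ^ 2 := by nlinarith
    have h3 := mul_le_mul_of_nonneg_left hf h2
    have h4 : (1 - t) ^ 2 * F - (F + δ ^ 2 / (8 * (d : ℝ) ^ 2)) =
        ((2 * t - t ^ 2) * ((d : ℝ) ^ 2 * (-F)) - δ ^ 2 / 8) / (d : ℝ) ^ 2 := by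
      field_simp
      ring
    rw [h4]
    apply div_pos _ (by positivity)
    nlinarith [pow_pos hδ0 2]
end

section
/- Let G be a simple graph on d ≥ 3 vertices with adjacency matrix A and clique number ω(G), let X = {x ∈ ℝ^d : x_i ≥ 0 for all i and ∑_i x_i ≤ 1}, and for an integer k with 1 ≤ k ≤ d define f_k(x) = xᵀAx − (1 − 1/k)(∑_i x_i)². For every δ ∈ (0,1] and every integer k with 1 ≤ k < ω(G), every x ∈ X with ∑_i x_i ≤ δ/2 is not a (δ²/(8d²), δ)-local maximizer of f_k over X; that is, there exists x′ ∈ X with ‖x′ − x‖₂ ≤ δ and f_k(x′) > f_k(x) + δ²/(8d²). -/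
theorem aux_fk_two {d : ℕ} (G : SimpleGraph (Fin d)) [DecidableRel G.Adj] (k : ℕ)
    (x : EuclideanSpace ℝ (Fin d)) : fkFun G k (x + x) = 4 * fkFun G k x := by
  unfold fkFun
  simp only [PiLp.add_apply, Finset.sum_add_distrib]
  have : ∀ i j, SimpleGraph.adjMatrix ℝ G i j * (x i + x i) * (x j + x j)
      = 4 * (SimpleGraph.adjMatrix ℝ G i j * x i * x j) := by intros; ring
  simp only [this, ← Finset.mul_sum]
  ring

theorem aux_sq_le {d : ℕ} (x : EuclideanSpace ℝ (Fin d)) (h : ∀ i, 0 ≤ x i) :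
    ∑ i, x i ^ 2 ≤ (∑ i, x i) ^ 2 := by
  rw [sq (∑ i, x i), Finset.sum_mul]
  refine Finset.sum_le_sum fun i _ => ?_
  rw [sq]
  exact mul_le_mul_of_nonneg_left
    (Finset.single_le_sum (f := fun i => x i) (fun j _ => h j) (Finset.mem_univ i)) (h i)

/-- For every `δ ∈ (0,1]` and every integer `k` with
`1 ≤ k < ω(G)`, every `x ∈ X` with `∑_i x_i ≤ δ/2` is not a
`(δ²/(8d²), δ)`-local maximizer of `f_k` over `X`: there is `x′ ∈ X` with
`‖x′ − x‖₂ ≤ δ` and `f_k(x′) > f_k(x) + δ²/(8d²)`. -/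
theorem stmt_15 {d : ℕ} (hd : 3 ≤ d) (G : SimpleGraph (Fin d)) [DecidableRel G.Adj]
    {δ : ℝ} (hδ0 : 0 < δ) (hδ1 : δ ≤ 1)
    {k : ℕ} (hk1 : 1 ≤ k) (hk : k < G.cliqueNum) (hkd : k ≤ d)
    {x : EuclideanSpace ℝ (Fin d)} (hx : x ∈ stdCorner d)
    (hxsmall : ∑ i, x i ≤ δ / 2) :
    ∃ x' ∈ stdCorner d, ‖x' - x‖ ≤ δ ∧
      fkFun G k x + δ ^ 2 / (8 * (d : ℝ) ^ 2) < fkFun G k x' := by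
  have hx0 := hx.1
  have hs0 : 0 ≤ ∑ i, x i := Finset.sum_nonneg fun i _ => hx0 i
  have hsq := aux_sq_le x hx0
  have hs2 : (∑ i, x i) ^ 2 ≤ δ ^ 2 / 4 := by nlinarith
  have hdpos : (0 : ℝ) < d := by
    have : 0 < d := by omega
    exact_mod_cast this
  have hE : 0 < δ ^ 2 / (8 * (d : ℝ) ^ 2) := by positivity
  by_cases hc : δ ^ 2 / (8 * (d : ℝ) ^ 2) < 3 * fkFun G k x
  · refine ⟨x + x, ⟨fun i => ?_, ?_⟩, ?_, ?_⟩
    · simpa using add_nonneg (hx0 i) (hx0 i)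
    · simp only [PiLp.add_apply, Finset.sum_add_distrib]
      linarith
    · rw [add_sub_cancel_right, EuclideanSpace.norm_eq]
      refine Real.sqrt_le_iff.2 ⟨hδ0.le, ?_⟩
      simp only [Real.norm_eq_abs, sq_abs]
      nlinarith
    · rw [aux_fk_two]
      linarith
  obtain ⟨C, hC⟩ := G.exists_isNClique_cliqueNum
  set w := G.cliqueNum with hw
  have hwd : w ≤ d := by
    have := Finset.card_le_univ C
    rw [hC.card_eq, Fintype.card_fin] at this
    exact this
  have hw2 : (2 : ℝ) ≤ w := by
    have : 2 ≤ w := by omega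
    exact_mod_cast this
  have hwd' : (w : ℝ) ≤ d := by exact_mod_cast hwd
  have hkd' : (k : ℝ) ≤ d := by exact_mod_cast hkd
  have hk0 : (1 : ℝ) ≤ k := by exact_mod_cast hk1
  have hkw : (k : ℝ) + 1 ≤ w := by exact_mod_cast hk
  have hw0 : (0 : ℝ) < w := by linarith
  let y : EuclideanSpace ℝ (Fin d) := WithLp.toLp 2 (fun i => if i ∈ C then δ / w else 0)
  have hy : ∀ i, y i = if i ∈ C then δ / w else 0 := fun i => rfl
  have hy0 : ∀ i, 0 ≤ y i := by
    intro i
    rw [hy]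
    split_ifs
    · positivity
    · exact le_rfl
  have hys : ∑ i, y i = δ := by
    simp only [hy, Finset.sum_ite_mem, Finset.univ_inter, Finset.sum_const, hC.card_eq,
      nsmul_eq_mul]
    field_simp
  have hyq : ∑ i, y i ^ 2 = δ ^ 2 / w := by
    simp only [hy, ite_pow, ne_eq, OfNat.ofNat_ne_zero, not_false_eq_true, zero_pow,
      Finset.sum_ite_mem, Finset.univ_inter, Finset.sum_const, hC.card_eq,
      nsmul_eq_mul]
    field_simp
  have hyA : ∑ i, ∑ j, SimpleGraph.adjMatrix ℝ G i j * y i * y j = δ ^ 2 - δ ^ 2 / w := by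
    have : ∀ i j, SimpleGraph.adjMatrix ℝ G i j * y i * y j
        = y i * y j - if i = j then y i ^ 2 else 0 := by
      intro i j
      rw [SimpleGraph.adjMatrix_apply]
      by_cases hij : i = j
      · subst hij
        simp [sq]
      · rw [if_neg hij]
        by_cases hi : i ∈ C
        · by_cases hj : j ∈ C
          · rw [if_pos (hC.isClique hi hj hij)]
            ring
          · simp [hy j, hj]
        · simp [hy i, hi]
    simp only [this, Finset.sum_sub_distrib, Finset.sum_ite_eq, Finset.mem_univ, if_true,
      ← Finset.mul_sum, hys, ← Finset.sum_mul, hyq]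
    ring
  have hqw : δ ^ 2 / w ≤ δ ^ 2 / 2 :=
    div_le_div_of_nonneg_left (by positivity) (by norm_num) hw2
  refine ⟨y, ⟨hy0, by rw [hys]; exact hδ1⟩, ?_, ?_⟩
  · rw [EuclideanSpace.norm_eq]
    refine Real.sqrt_le_iff.2 ⟨hδ0.le, ?_⟩
    simp only [Real.norm_eq_abs, sq_abs, PiLp.sub_apply]
    have : ∑ i, (y i - x i) ^ 2 ≤ ∑ i, (y i ^ 2 + x i ^ 2) := by
      refine Finset.sum_le_sum fun i _ => ?_
      nlinarith [mul_nonneg (hy0 i) (hx0 i)]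
    rw [Finset.sum_add_distrib, hyq] at this
    nlinarith
  · have hval : fkFun G k y = δ ^ 2 * (1 / k - 1 / w) := by
      unfold fkFun
      rw [hyA, hys]
      ring
    have hgap : 1 / (d : ℝ) ^ 2 ≤ 1 / k - 1 / w := by
      have h1 : 1 / (k : ℝ) - 1 / w = (w - k) / (k * w) := by
        field_simp
      rw [h1]
      have hk00 : (0 : ℝ) < k := by linarith
      apply div_le_div₀ (by linarith) (by linarith) (by positivity)
      nlinarith
    have h2 : δ ^ 2 * (1 / (d : ℝ) ^ 2) ≤ fkFun G k y := by
      rw [hval]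
      exact mul_le_mul_of_nonneg_left hgap (by positivity)
    have h3 : δ ^ 2 * (1 / (d : ℝ) ^ 2) = 8 * (δ ^ 2 / (8 * (d : ℝ) ^ 2)) := by
      field_simp
    linarith
end

section
/- Let G be a simple graph on d ≥ 3 vertices with adjacency matrix A and clique number ω(G), let X = {x ∈ ℝ^d : x_i ≥ 0 for all i and ∑_i x_i ≤ 1}, and for an integer k with 1 ≤ k ≤ d define f_k(x) = xᵀAx − (1 − 1/k)(∑_i x_i)². Fix δ ∈ (0,1] and an integer k with ω(G) + 1 ≤ k ≤ d, and define φ(x) = (1 − δ/(12d³‖x‖₁))·x for x with ‖x‖₁ > 0. Then for every x ∈ X with ‖x‖₁ ≥ δ/(12d³), one has φ(x) ∈ X, ‖φ(x) − x‖₂ ≤ δ, and f_k(φ(x)) − f_k(x) > δ²/(144d⁸). -/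
open Matrix in
theorem motzkin_aux {d : ℕ} (G : SimpleGraph (Fin d)) [DecidableRel G.Adj] (n : ℕ) :
    ∀ x : Fin d → ℝ, (∀ i, 0 ≤ x i) → (Finset.univ.filter (fun i => x i ≠ 0)).card ≤ n →
      x ⬝ᵥ (G.adjMatrix ℝ *ᵥ x) ≤ (1 - 1 / (G.cliqueNum : ℝ)) * (∑ i, x i) ^ 2 := by
  induction n with
  | zero =>
    intro x hx hc
    have h0 : x = 0 := by
      funext i
      by_contra h
      have : i ∈ Finset.univ.filter (fun i => x i ≠ 0) := by simpa using h
      have := Finset.card_pos.mpr ⟨i, this⟩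
      omega
    subst h0
    simp
  | succ n ih =>
    intro x hx hc
    set T := Finset.univ.filter (fun i => x i ≠ 0) with hT
    by_cases hcl : G.IsClique (T : Set (Fin d))
    · have hm : T.card ≤ G.cliqueNum := SimpleGraph.IsClique.card_le_cliqueNum (tc := hcl)
      have hq : x ⬝ᵥ (G.adjMatrix ℝ *ᵥ x) = (∑ i, x i) ^ 2 - ∑ i, x i ^ 2 := by
        simp only [dotProduct, mulVec, Finset.mul_sum]
        rw [sq, Finset.sum_mul_sum, ← Finset.sum_sub_distrib]
        refine Finset.sum_congr rfl fun i _ => ?_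
        have : x i ^ 2 = ∑ j, if i = j then x i * x j else 0 := by simp [sq]
        rw [this, ← Finset.sum_sub_distrib]
        refine Finset.sum_congr rfl fun j _ => ?_
        by_cases hij : i = j
        · subst hij; simp
        · by_cases hi : x i = 0
          · simp [hi]
          by_cases hj : x j = 0
          · simp [hj]
          have : G.Adj i j := hcl (by simpa [hT] using hi) (by simpa [hT] using hj) hij
          simp [this, hij]
      have hs : ∑ i, x i = ∑ i ∈ T, x i := by
        rw [hT, Finset.sum_filter_ne_zero]
      have hs2 : ∑ i ∈ T, x i ^ 2 ≤ ∑ i, x i ^ 2 :=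
        Finset.sum_le_sum_of_subset_of_nonneg (Finset.subset_univ _) (fun i _ _ => sq_nonneg _)
      have hcs : (∑ i ∈ T, x i) ^ 2 ≤ T.card * ∑ i ∈ T, x i ^ 2 := sq_sum_le_card_mul_sum_sq
      rw [hq]
      rcases Nat.eq_zero_or_pos G.cliqueNum with h0 | h0
      · simp only [h0, Nat.cast_zero, div_zero, sub_zero, one_mul]
        have : 0 ≤ ∑ i, x i ^ 2 := Finset.sum_nonneg fun i _ => sq_nonneg _
        linarith
      · have hw : (0:ℝ) < G.cliqueNum := by exact_mod_cast h0
        have hm' : (T.card : ℝ) ≤ G.cliqueNum := by exact_mod_cast hm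
        have h1 : (∑ i, x i) ^ 2 ≤ G.cliqueNum * ∑ i, x i ^ 2 := by
          rw [hs]
          refine hcs.trans (mul_le_mul hm' hs2 (Finset.sum_nonneg fun i _ => sq_nonneg _) hw.le)
        have h2 : 1 / (G.cliqueNum : ℝ) * (∑ i, x i) ^ 2 ≤ ∑ i, x i ^ 2 := by
          rw [one_div, inv_mul_le_iff₀ hw]; exact h1
        linarith
    · have hex : ∃ i j, x i ≠ 0 ∧ x j ≠ 0 ∧ i ≠ j ∧ ¬ G.Adj i j ∧
          (G.adjMatrix ℝ *ᵥ x) j ≤ (G.adjMatrix ℝ *ᵥ x) i := by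
        have : ∃ i j, x i ≠ 0 ∧ x j ≠ 0 ∧ i ≠ j ∧ ¬ G.Adj i j := by
          by_contra! h
          apply hcl
          intro i hi j hj hij
          exact h i j (by simpa [hT] using hi) (by simpa [hT] using hj) hij
        obtain ⟨i, j, h1, h2, h3, h4⟩ := this
        rcases le_total ((G.adjMatrix ℝ *ᵥ x) j) ((G.adjMatrix ℝ *ᵥ x) i) with h | h
        · exact ⟨i, j, h1, h2, h3, h4, h⟩
        · exact ⟨j, i, h2, h1, h3.symm, fun h => h4 h.symm, h⟩
      obtain ⟨i, j, hi, hj, hij, hadj, hle⟩ := hex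
      set v : Fin d → ℝ := Pi.single i 1 - Pi.single j 1 with hv
      set y : Fin d → ℝ := x + x j • v with hy
      have hsum : ∑ l, y l = ∑ l, x l := by
        simp [hy, hv, Finset.sum_add_distrib, ← Finset.mul_sum]
      have hyj : y j = 0 := by simp [hy, hv, hij.symm]
      have hyi : y i = x i + x j := by simp [hy, hv, hij]
      have hyl : ∀ l, l ≠ i → l ≠ j → y l = x l := by
        intro l h1 h2; simp [hy, hv, h1, h2]
      have hy0 : ∀ l, 0 ≤ y l := by
        intro l
        by_cases h1 : l = i
        · subst h1; rw [hyi]; exact add_nonneg (hx _) (hx _)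
        by_cases h2 : l = j
        · subst h2; rw [hyj]
        rw [hyl l h1 h2]; exact hx l
      have hcard : (Finset.univ.filter (fun i => y i ≠ 0)).card ≤ n := by
        have hsub : Finset.univ.filter (fun i => y i ≠ 0) ⊆ T.erase j := by
          intro l hl
          have hl' : y l ≠ 0 := by simpa using hl
          have h2 : l ≠ j := by rintro rfl; exact hl' hyj
          refine Finset.mem_erase.mpr ⟨h2, ?_⟩
          by_cases h1 : l = i
          · subst h1; simpa [hT] using hi
          · rw [hyl l h1 h2] at hl'; simpa [hT] using hl'
        have h1 := Finset.card_le_card hsub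
        have hjT : j ∈ T := by simpa [hT] using hj
        rw [Finset.card_erase_of_mem hjT] at h1
        omega
      have key := ih y hy0 hcard
      rw [hsum] at key
      refine le_trans ?_ key
      have hvv : v ⬝ᵥ (G.adjMatrix ℝ *ᵥ v) = 0 := by
        have hadj' : ¬ G.Adj j i := fun h => hadj h.symm
        simp [hv, mulVec_sub, sub_dotProduct, hadj, hadj']
      have hvx : v ⬝ᵥ (G.adjMatrix ℝ *ᵥ x) = (G.adjMatrix ℝ *ᵥ x) i - (G.adjMatrix ℝ *ᵥ x) j := by
        rw [hv, sub_dotProduct, single_one_dotProduct, single_one_dotProduct]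
      have hxv : x ⬝ᵥ (G.adjMatrix ℝ *ᵥ v) = v ⬝ᵥ (G.adjMatrix ℝ *ᵥ x) := by
        rw [dotProduct_mulVec, ← mulVec_transpose, SimpleGraph.transpose_adjMatrix, dotProduct_comm]
      have : y ⬝ᵥ (G.adjMatrix ℝ *ᵥ y) = x ⬝ᵥ (G.adjMatrix ℝ *ᵥ x)
          + 2 * x j * ((G.adjMatrix ℝ *ᵥ x) i - (G.adjMatrix ℝ *ᵥ x) j) := by
        rw [hy, mulVec_add, mulVec_smul, add_dotProduct, dotProduct_add, dotProduct_add,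
          smul_dotProduct, smul_dotProduct, dotProduct_smul, dotProduct_smul, hvv, hxv, hvx]
        simp only [smul_eq_mul]; ring
      rw [this]
      have := mul_nonneg (hx j) (sub_nonneg.mpr hle)
      linarith

theorem fk_smul {d : ℕ} (G : SimpleGraph (Fin d)) [DecidableRel G.Adj] (k : ℕ) (c : ℝ)
    (x : EuclideanSpace ℝ (Fin d)) : fkFun G k (c • x) = c ^ 2 * fkFun G k x := by
  have h1 : ∑ i, (c • x) i = c * ∑ i, x i := by
    rw [Finset.mul_sum]; rfl
  have h2 : ∑ i, ∑ j, SimpleGraph.adjMatrix ℝ G i j * (c • x) i * (c • x) j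
      = c ^ 2 * ∑ i, ∑ j, SimpleGraph.adjMatrix ℝ G i j * x i * x j := by
    rw [Finset.mul_sum]
    refine Finset.sum_congr rfl fun i _ => ?_
    rw [Finset.mul_sum]
    refine Finset.sum_congr rfl fun j _ => ?_
    simp only [PiLp.smul_apply, smul_eq_mul]
    ring
  rw [fkFun, fkFun, h1, h2]
  ring

theorem fk_bound {d : ℕ} (hd : 3 ≤ d) (G : SimpleGraph (Fin d)) [DecidableRel G.Adj]
    {k : ℕ} (hk : G.cliqueNum + 1 ≤ k) (hkd : k ≤ d)
    {x : EuclideanSpace ℝ (Fin d)} (hx : ∀ i, 0 ≤ x i) (hs : 0 < ∑ i, x i) :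
    (∑ i, x i) ^ 2 / (d : ℝ) ^ 2 < - fkFun G k x := by
  have h := motzkin_aux G _ (fun i => x i) hx le_rfl
  have hw : 1 ≤ G.cliqueNum := by
    have : G.IsClique (({⟨0, by omega⟩} : Finset (Fin d)) : Set (Fin d)) := by simp
    simpa using SimpleGraph.IsClique.card_le_cliqueNum (tc := this)
  have hq : (fun i => x i) ⬝ᵥ (Matrix.mulVec (G.adjMatrix ℝ) (fun i => x i))
      = ∑ i, ∑ j, SimpleGraph.adjMatrix ℝ G i j * x i * x j := by
    simp only [dotProduct, Matrix.mulVec, Finset.mul_sum]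
    exact Finset.sum_congr rfl fun i _ => Finset.sum_congr rfl fun j _ => by ring
  rw [hq] at h
  set s := ∑ i, x i
  have hw' : (1:ℝ) ≤ G.cliqueNum := by exact_mod_cast hw
  have hk' : (G.cliqueNum : ℝ) + 1 ≤ k := by exact_mod_cast hk
  have hkd' : (k : ℝ) ≤ d := by exact_mod_cast hkd
  set w : ℝ := (G.cliqueNum : ℝ)
  have hgap : 1 / (d:ℝ) ^ 2 < 1 / w - 1 / k := by
    have hkp : (0:ℝ) < k := by linarith
    have hwp : 0 < w := by linarith
    have h1 : 1 / w - 1 / k = (k - w) / (w * k) := by field_simp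
    rw [h1, div_lt_div_iff₀ (by nlinarith) (by positivity)]
    nlinarith [mul_pos hwp hkp, mul_le_mul hkd' hkd' hkp.le (by linarith)]
  have : s ^ 2 * (1 / (d:ℝ) ^ 2) < s ^ 2 * (1 / w - 1 / k) :=
    mul_lt_mul_of_pos_left hgap (by positivity)
  rw [fkFun]
  have e : s ^ 2 / (d:ℝ) ^ 2 = s ^ 2 * (1 / (d:ℝ) ^ 2) := by ring
  rw [e]
  change _ < -(_ - (1 - 1 / (k:ℝ)) * s ^ 2)
  linarith

/-- Fix `δ ∈ (0,1]` and an integer `k` with `ω(G) + 1 ≤ k ≤ d`, and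
let `φ(x) = (1 − δ/(12d³‖x‖₁))·x`. Then for every `x ∈ X` with `‖x‖₁ ≥ δ/(12d³)`,
one has `φ(x) ∈ X`, `‖φ(x) − x‖₂ ≤ δ`, and `f_k(φ(x)) − f_k(x) > δ²/(144d⁸)`. -/
theorem stmt_16 {d : ℕ} (hd : 3 ≤ d) (G : SimpleGraph (Fin d)) [DecidableRel G.Adj]
    {δ : ℝ} (hδ0 : 0 < δ) (hδ1 : δ ≤ 1)
    {k : ℕ} (hk : G.cliqueNum + 1 ≤ k) (hkd : k ≤ d)
    {x : EuclideanSpace ℝ (Fin d)} (hx : x ∈ stdCorner d)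
    (hxbig : δ / (12 * (d : ℝ) ^ 3) ≤ ∑ i, x i) :
    (1 - δ / (12 * (d : ℝ) ^ 3 * ∑ i, x i)) • x ∈ stdCorner d ∧
    ‖(1 - δ / (12 * (d : ℝ) ^ 3 * ∑ i, x i)) • x - x‖ ≤ δ ∧
    δ ^ 2 / (144 * (d : ℝ) ^ 8)
      < fkFun G k ((1 - δ / (12 * (d : ℝ) ^ 3 * ∑ i, x i)) • x) - fkFun G k x := by
  obtain ⟨hx0, hx1⟩ := hx
  have hd' : (3:ℝ) ≤ d := by exact_mod_cast hd
  have hD : 0 < 12 * (d:ℝ) ^ 3 := by positivity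
  have hε : 0 < δ / (12 * (d:ℝ) ^ 3) := by positivity
  have hs : 0 < ∑ i, x i := hε.trans_le hxbig
  have hfb := fk_bound hd G hk hkd hx0 hs
  have hD1 : 1 ≤ 12 * (d:ℝ) ^ 3 := by
    have : (1:ℝ) ≤ (d:ℝ) ^ 3 := one_le_pow₀ (by linarith)
    linarith
  have hεδ : δ / (12 * (d:ℝ) ^ 3) ≤ δ := div_le_self hδ0.le hD1
  have hnorm : ‖x‖ ≤ ∑ i, x i := by
    rw [EuclideanSpace.norm_eq]
    apply Real.sqrt_le_iff.mpr
    refine ⟨hs.le, ?_⟩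
    simp only [Real.norm_eq_abs, sq_abs]
    exact Finset.sum_sq_le_sq_sum_of_nonneg fun i _ => hx0 i
  have hr : δ / (12 * (d:ℝ) ^ 3 * ∑ i, x i) = δ / (12 * (d:ℝ) ^ 3) / ∑ i, x i := by
    rw [div_div]
  have hE : δ ^ 2 / (144 * (d:ℝ) ^ 8) = (δ / (12 * (d:ℝ) ^ 3)) ^ 2 / (d:ℝ) ^ 2 := by
    field_simp; ring
  rw [fk_smul, hr, hE]
  set ε := δ / (12 * (d:ℝ) ^ 3)
  set s := ∑ i, x i with hsdef
  have hr0 : 0 < ε / s := by positivity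
  have hr1 : ε / s ≤ 1 := (div_le_one hs).mpr hxbig
  have hrs : ε / s * s = ε := by field_simp
  set r := ε / s
  refine ⟨⟨fun i => ?_, ?_⟩, ?_, ?_⟩
  · simpa using mul_nonneg (sub_nonneg.mpr hr1) (hx0 i)
  · simp only [PiLp.smul_apply, smul_eq_mul, ← Finset.mul_sum]
    rw [← hsdef]
    nlinarith
  · have : (1 - r) • x - x = (-r) • x := by module
    rw [this, norm_smul, Real.norm_eq_abs, abs_neg, abs_of_pos hr0]
    nlinarith
  · have h1 : ε ^ 2 / (d:ℝ) ^ 2 ≤ r * (s ^ 2 / (d:ℝ) ^ 2) := by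
      rw [← mul_div_assoc]
      gcongr
      nlinarith
    have h2 : r * (s ^ 2 / (d:ℝ) ^ 2) < r * (- fkFun G k x) := mul_lt_mul_of_pos_left hfb hr0
    have hp : 0 < - fkFun G k x := lt_of_le_of_lt (by positivity) hfb
    have h3 : 0 ≤ r * (1 - r) * (- fkFun G k x) :=
      mul_nonneg (mul_nonneg hr0.le (sub_nonneg.mpr hr1)) hp.le
    nlinarith
end

section
/- Let G be a simple graph on d ≥ 3 vertices with adjacency matrix A and clique number ω(G), let X = {x ∈ ℝ^d : x_i ≥ 0 for all i and ∑_i x_i ≤ 1}, and for an integer k with 1 ≤ k ≤ d define f_k(x) = xᵀAx − (1 − 1/k)(∑_i x_i)². Fix δ ∈ (0,1] and an integer k with 1 ≤ k < ω(G). Then there exists a point x* in the standard simplex Δ^d = {x ∈ ℝ^d : x_i ≥ 0 for all i, ∑_i x_i = 1} such that the single map φ(x) = (1 − δ/√d)·x + (δ/√d)·x* satisfies: for every x ∈ X with ‖x‖₁ ≤ δ/(12d³), f_k(φ(x)) − f_k(x) > δ²/(144d⁸). -/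
theorem aux_main {t s c v P Q : ℝ} (ht0 : 0 < t) (ht1 : t ≤ 1) (hs0 : 0 ≤ s) (hs1 : s ≤ 1)
    (hc0 : 0 < c) (hc1 : c ≤ 1) (hQx : Q ≤ s ^ 2)
    (hQ : (1 - t) ^ 2 * Q + t ^ 2 * (1 - v) ≤ P) :
    t ^ 2 * (c - v) - 4 * (t * s) ≤
      P - (1 - c) * ((1 - t) * s + t) ^ 2 - (Q - (1 - c) * s ^ 2) := by
  have h0 : 0 ≤ t * (2 - t) := mul_nonneg ht0.le (by linarith)
  have h6 : 0 ≤ t * s := by positivity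
  have e1 : t * (2 - t) * Q ≤ t * (2 - t) * s ^ 2 := mul_le_mul_of_nonneg_left hQx h0
  have e2 : t * (2 - t) * s ^ 2 ≤ 2 * (t * s) := by
    have h5 : (2 - t) * s ≤ 2 := by nlinarith
    calc t * (2 - t) * s ^ 2 = (t * s) * ((2 - t) * s) := by ring
      _ ≤ (t * s) * 2 := mul_le_mul_of_nonneg_left h5 h6
      _ = _ := by ring
  have e3 : (1 - c) * (2 * t * (1 - t) * s) ≤ 2 * (t * s) := by
    have h7 : (1 - c) * (1 - t) ≤ 1 := by nlinarith
    calc (1 - c) * (2 * t * (1 - t) * s) = (2 * (t * s)) * ((1 - c) * (1 - t)) := by ring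
      _ ≤ (2 * (t * s)) * 1 := mul_le_mul_of_nonneg_left h7 (by linarith)
      _ = _ := by ring
  have e4 : 0 ≤ (1 - c) * (t * (2 - t) * s ^ 2) :=
    mul_nonneg (by linarith) (mul_nonneg h0 (sq_nonneg s))
  linarith

/-- Fix `δ ∈ (0,1]` and an integer `k` with `1 ≤ k < ω(G)`. Then
there is a point `x*` of the standard simplex such that the single map
`φ(x) = (1 − δ/√d)·x + (δ/√d)·x*` satisfies: for every `x ∈ X` with
`‖x‖₁ ≤ δ/(12d³)`, `f_k(φ(x)) − f_k(x) > δ²/(144d⁸)`. -/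
theorem stmt_17 {d : ℕ} (hd : 3 ≤ d) (G : SimpleGraph (Fin d)) [DecidableRel G.Adj]
    {δ : ℝ} (hδ0 : 0 < δ) (hδ1 : δ ≤ 1)
    {k : ℕ} (hk1 : 1 ≤ k) (hk : k < G.cliqueNum) :
    ∃ xstar : EuclideanSpace ℝ (Fin d),
      (∀ i, 0 ≤ xstar i) ∧ (∑ i, xstar i) = 1 ∧
      ∀ x ∈ stdCorner d, (∑ i, x i) ≤ δ / (12 * (d : ℝ) ^ 3) →
        δ ^ 2 / (144 * (d : ℝ) ^ 8)
          < fkFun G k ((1 - δ / Real.sqrt d) • x + (δ / Real.sqrt d) • xstar)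
            - fkFun G k x := by
  classical
  obtain ⟨S, hS⟩ := G.exists_isNClique_cliqueNum
  obtain ⟨hcl, hcard⟩ := hS
  set w := G.cliqueNum with hw
  have hwd : w ≤ d := by
    rw [← hcard]; simpa using Finset.card_le_univ S
  have hw0 : (0 : ℝ) < w := by exact_mod_cast (by omega : 0 < w)
  have hd3 : (3 : ℝ) ≤ d := by exact_mod_cast hd
  have hwd' : (w : ℝ) ≤ d := by exact_mod_cast hwd
  have hk1' : (1 : ℝ) ≤ k := by exact_mod_cast hk1
  have hk' : (k : ℝ) + 1 ≤ w := by exact_mod_cast hk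
  let u : Fin d → ℝ := fun i => if i ∈ S then 1 / (w : ℝ) else 0
  have hu0 : ∀ i, 0 ≤ u i := by
    intro i; simp only [u]; split_ifs <;> positivity
  have hu1 : ∑ i, u i = 1 := by
    simp only [u, Finset.sum_ite_mem, Finset.univ_inter, Finset.sum_const, hcard, nsmul_eq_mul]
    field_simp
  have hu2 : ∑ i, u i * u i = 1 / (w : ℝ) := by
    have : ∀ i, u i * u i = 1 / (w : ℝ) * u i := by
      intro i; simp only [u]; split_ifs <;> simp
    simp only [this, ← Finset.mul_sum, hu1, mul_one]
  have hQu : ∑ i, ∑ j, SimpleGraph.adjMatrix ℝ G i j * u i * u j = 1 - 1 / (w : ℝ) := by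
    have h1 : ∀ i j, SimpleGraph.adjMatrix ℝ G i j * u i * u j
        = u i * u j - if i = j then u i * u j else 0 := by
      intro i j
      by_cases hij : i = j
      · subst hij; simp
      · by_cases hi : i ∈ S
        · by_cases hj : j ∈ S
          · have : G.Adj i j := hcl hi hj hij
            simp [hij, this]
          · simp [u, hj]
        · simp [u, hi]
    simp only [h1, Finset.sum_sub_distrib, Finset.sum_ite_eq, Finset.mem_univ, if_true, hu2,
      ← Finset.mul_sum, hu1, mul_one]
  refine ⟨WithLp.toLp 2 u, hu0, hu1, ?_⟩
  rintro x ⟨hx0, hx1⟩ hxs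
  have hsd1 : 1 ≤ Real.sqrt d := Real.one_le_sqrt.mpr (by linarith)
  have hsq : Real.sqrt d ^ 2 = d := Real.sq_sqrt (by linarith)
  set t := δ / Real.sqrt d with ht
  have ht0 : 0 < t := by positivity
  have ht1 : t ≤ δ := div_le_self hδ0.le hsd1
  have ht1' : t ≤ 1 := ht1.trans hδ1
  have htsq : t ^ 2 = δ ^ 2 / d := by rw [ht, div_pow, hsq]
  unfold fkFun
  have hsum : ∑ i, ((1 - t) • x + t • (WithLp.toLp 2 u : EuclideanSpace ℝ (Fin d))) i
      = (1 - t) * ∑ i, x i + t := by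
    simp [Finset.sum_add_distrib, ← Finset.mul_sum, hu1]
  have ha : ∀ i j, 0 ≤ SimpleGraph.adjMatrix ℝ G i j ∧ SimpleGraph.adjMatrix ℝ G i j ≤ 1 := by
    intro i j; simp only [SimpleGraph.adjMatrix_apply]; split_ifs <;> norm_num
  have hQ : (1 - t) ^ 2 * (∑ i, ∑ j, SimpleGraph.adjMatrix ℝ G i j * x i * x j)
      + t ^ 2 * (1 - 1 / (w : ℝ)) ≤ ∑ i, ∑ j, SimpleGraph.adjMatrix ℝ G i j
        * ((1 - t) • x + t • (WithLp.toLp 2 u : EuclideanSpace ℝ (Fin d))) i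
        * ((1 - t) • x + t • (WithLp.toLp 2 u : EuclideanSpace ℝ (Fin d))) j := by
    rw [← hQu]
    simp only [Finset.mul_sum, ← Finset.sum_add_distrib]
    refine Finset.sum_le_sum fun i _ => Finset.sum_le_sum fun j _ => ?_
    simp only [PiLp.add_apply, PiLp.smul_apply, smul_eq_mul]
    have h1 : 0 ≤ 1 - t := by linarith
    have h2 := (ha i j).1
    have h3 : 0 ≤ SimpleGraph.adjMatrix ℝ G i j * (t * (1 - t)) * (x i * u j + u i * x j) := by
      have := hx0 i; have := hx0 j; have := hu0 i; have := hu0 j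
      positivity
    linarith [h3]
  have hQx : ∑ i, ∑ j, SimpleGraph.adjMatrix ℝ G i j * x i * x j ≤ (∑ i, x i) ^ 2 := by
    rw [sq, Finset.sum_mul_sum]
    refine Finset.sum_le_sum fun i _ => Finset.sum_le_sum fun j _ => ?_
    have := mul_nonneg (hx0 i) (hx0 j)
    nlinarith [(ha i j).2]
  rw [hsum]
  have hs0 : 0 ≤ ∑ i, x i := Finset.sum_nonneg fun i _ => hx0 i
  generalize (∑ i, ∑ j, SimpleGraph.adjMatrix ℝ G i j
        * ((1 - t) • x + t • (WithLp.toLp 2 u : EuclideanSpace ℝ (Fin d))) i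
        * ((1 - t) • x + t • (WithLp.toLp 2 u : EuclideanSpace ℝ (Fin d))) j) = P at *
  generalize (∑ i, ∑ j, SimpleGraph.adjMatrix ℝ G i j * x i * x j) = Q at *
  generalize (∑ i, x i) = s at *
  have hgap : 1 / (d : ℝ) ^ 2 ≤ 1 / (k : ℝ) - 1 / w := by
    have hk0 : (0 : ℝ) < k := by linarith
    rw [div_sub_div _ _ hk0.ne' hw0.ne', div_le_div_iff₀ (by positivity) (by positivity)]
    have : (k : ℝ) * w ≤ d ^ 2 := by nlinarith
    nlinarith [sq_nonneg (d : ℝ)]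
  have hc1 : 1 / (k : ℝ) ≤ 1 := by rw [div_le_one] <;> linarith
  have hc0 : 0 < 1 / (k : ℝ) := by positivity
  generalize 1 / (k : ℝ) = c at *
  generalize 1 / (w : ℝ) = v at *
  have hts : t * s ≤ δ ^ 2 / (12 * (d : ℝ) ^ 3) := by
    calc t * s ≤ δ * (δ / (12 * (d : ℝ) ^ 3)) := by gcongr
      _ = _ := by ring
  have hmain := aux_main ht0 ht1' hs0 hx1 hc0 hc1 hQx hQ
  have hfin : δ ^ 2 / (d : ℝ) ^ 3 ≤ t ^ 2 * (c - v) := by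
    calc δ ^ 2 / (d : ℝ) ^ 3 = t ^ 2 * (1 / (d : ℝ) ^ 2) := by rw [htsq]; field_simp
      _ ≤ _ := by gcongr
  have h8 : δ ^ 2 / (144 * (d : ℝ) ^ 8) ≤ δ ^ 2 / (d : ℝ) ^ 3 / 144 := by
    rw [div_div, mul_comm]
    have : (d : ℝ) ^ 3 ≤ d ^ 8 := pow_le_pow_right₀ (by linarith) (by norm_num)
    gcongr
  have h9 : δ ^ 2 / (12 * (d : ℝ) ^ 3) = δ ^ 2 / (d : ℝ) ^ 3 / 12 := by
    rw [div_div, mul_comm]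
  have h10 : 0 < δ ^ 2 / (d : ℝ) ^ 3 := by positivity
  linarith
end

section
/- Let d ≥ 1, α ∈ (0,1), and 0 ≤ ε < α^d/2. Let B = {z ∈ ℝ^d : ‖z‖ ≤ 1} be the closed unit Euclidean ball and define u : B × B → ℝ by u(x₁, x₂) = 1 + cos((π/α²)·‖x₁ − x₂‖²) if ‖x₁ − x₂‖ ≤ α, and u(x₁, x₂) = 0 otherwise. Let p₁ and p₂ be finitely supported probability distributions on B, supported on k and l points respectively, forming an ε-approximate mixed Nash equilibrium of the two-player zero-sum game with payoff u to the first (maximizing) player: E_{x₂∼p₂}[u(x₁, x₂)] ≤ E_{x₁∼p₁, x₂∼p₂}[u(x₁, x₂)] + ε for every x₁ ∈ B, and E_{x₁∼p₁}[u(x₁, x₂)] ≥ E_{x₁∼p₁, x₂∼p₂}[u(x₁, x₂)] − ε for every x₂ ∈ B. Then k ≥ (1/α)^d or l ≥ (1/α)^d. -/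
/-- The payoff `u(x₁, x₂) = 1 + cos((π/α²)‖x₁ − x₂‖²)` if `‖x₁ − x₂‖ ≤ α`, and `0`
otherwise. -/
noncomputable def karlinPayoff {d : ℕ} (α : ℝ) (x₁ x₂ : EuclideanSpace ℝ (Fin d)) : ℝ :=
  if ‖x₁ - x₂‖ ≤ α then 1 + Real.cos (Real.pi / α ^ 2 * ‖x₁ - x₂‖ ^ 2) else 0

/-- Let `d ≥ 1`, `α ∈ (0,1)`, `0 ≤ ε < α^d/2`, and let `B` be the closed
unit ball of `ℝ^d`. Let `p₁` (points `a : Fin k → B`, injective, with positive weights `w₁`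
summing to 1) and `p₂` (points `b : Fin l → B`, injective, positive weights `w₂` summing
to 1) be finitely supported distributions on `B` forming an `ε`-approximate mixed Nash
equilibrium of the zero-sum game with payoff `karlinPayoff α` to the maximizing first
player. Then `k ≥ (1/α)^d` or `l ≥ (1/α)^d`. -/
theorem stmt_18 {d : ℕ} (hd : 1 ≤ d) {α : ℝ} (hα0 : 0 < α) (hα1 : α < 1)
    {ε : ℝ} (hε0 : 0 ≤ ε) (hε : ε < α ^ d / 2)
    {k l : ℕ}
    (a : Fin k → EuclideanSpace ℝ (Fin d)) (b : Fin l → EuclideanSpace ℝ (Fin d))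
    (ha : ∀ i, ‖a i‖ ≤ 1) (hb : ∀ j, ‖b j‖ ≤ 1)
    (hainj : Function.Injective a) (hbinj : Function.Injective b)
    (w₁ : Fin k → ℝ) (w₂ : Fin l → ℝ)
    (hw₁pos : ∀ i, 0 < w₁ i) (hw₂pos : ∀ j, 0 < w₂ j)
    (hw₁ : ∑ i, w₁ i = 1) (hw₂ : ∑ j, w₂ j = 1)
    (hNE1 : ∀ x₁ : EuclideanSpace ℝ (Fin d), ‖x₁‖ ≤ 1 →
      ∑ j, w₂ j * karlinPayoff α x₁ (b j)
        ≤ (∑ i, ∑ j, w₁ i * w₂ j * karlinPayoff α (a i) (b j)) + ε)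
    (hNE2 : ∀ x₂ : EuclideanSpace ℝ (Fin d), ‖x₂‖ ≤ 1 →
      (∑ i, ∑ j, w₁ i * w₂ j * karlinPayoff α (a i) (b j)) - ε
        ≤ ∑ i, w₁ i * karlinPayoff α (a i) x₂) :
    (1 / α) ^ d ≤ (k : ℝ) ∨ (1 / α) ^ d ≤ (l : ℝ) := by
  by_contra hcon
  push Not at hcon
  obtain ⟨hk, hl⟩ := hcon
  have hαd : 0 < α ^ d := pow_pos hα0 d
  rw [one_div, inv_pow] at hk hl
  have hk' : (k : ℝ) * α ^ d < 1 := by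
    have := mul_lt_mul_of_pos_right hk hαd
    rwa [inv_mul_cancel₀ hαd.ne'] at this
  have hl' : (l : ℝ) * α ^ d < 1 := by
    have := mul_lt_mul_of_pos_right hl hαd
    rwa [inv_mul_cancel₀ hαd.ne'] at this
  have hu0 : ∀ x y : EuclideanSpace ℝ (Fin d), 0 ≤ karlinPayoff α x y := by
    intro x y
    unfold karlinPayoff
    split_ifs
    · linarith [Real.neg_one_le_cos (Real.pi / α ^ 2 * ‖x - y‖ ^ 2)]
    · exact le_rfl
  have hu2 : ∀ x : EuclideanSpace ℝ (Fin d), karlinPayoff α x x = 2 := by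
    intro x
    simp [karlinPayoff, hα0.le]
    norm_num
  obtain ⟨x, hx, hxa⟩ : ∃ x : EuclideanSpace ℝ (Fin d), ‖x‖ ≤ 1 ∧ ∀ i, α < ‖a i - x‖ := by
    by_contra hno
    push Not at hno
    have hsub : Metric.closedBall (0 : EuclideanSpace ℝ (Fin d)) 1
        ⊆ ⋃ i, Metric.closedBall (a i) α := by
      intro x hx
      obtain ⟨i, hi⟩ := hno x (by simpa using hx)
      exact Set.mem_iUnion.2 ⟨i, by rwa [Metric.mem_closedBall', dist_eq_norm]⟩
    have h1 := (MeasureTheory.measure_mono (μ := MeasureTheory.volume) hsub).trans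
      (MeasureTheory.measure_iUnion_fintype_le _ _)
    simp only [MeasureTheory.Measure.addHaar_closedBall _ _ hα0.le,
      MeasureTheory.Measure.addHaar_closedBall _ _ zero_le_one, finrank_euclideanSpace,
      Fintype.card_fin, one_pow, ENNReal.ofReal_one, one_mul, Finset.sum_const,
      Finset.card_univ, nsmul_eq_mul] at h1
    have hv0 : MeasureTheory.volume (Metric.ball (0 : EuclideanSpace ℝ (Fin d)) 1) ≠ 0 :=
      (Metric.measure_ball_pos _ _ one_pos).ne'
    have hv1 : MeasureTheory.volume (Metric.ball (0 : EuclideanSpace ℝ (Fin d)) 1) ≠ ⊤ :=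
      MeasureTheory.measure_ball_lt_top.ne
    have h2 := ENNReal.toReal_mono (by finiteness) h1
    have hp := ENNReal.toReal_pos hv0 hv1
    simp only [ENNReal.toReal_mul, ENNReal.toReal_ofReal hαd.le, ENNReal.toReal_natCast] at h2
    nlinarith
  have hV := hNE2 x hx
  have hz : ∑ i, w₁ i * karlinPayoff α (a i) x = 0 :=
    Finset.sum_eq_zero fun i _ => by simp [karlinPayoff, not_le.2 (hxa i)]
  rw [hz] at hV
  have hj : ∃ j, α ^ d ≤ w₂ j := by
    by_contra hno
    push Not at hno
    have := Finset.sum_le_sum (s := Finset.univ) fun j _ => (hno j).le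
    rw [hw₂] at this
    simp at this
    linarith
  obtain ⟨j, hj⟩ := hj
  have h3 := hNE1 (b j) (hb j)
  have h4 := Finset.single_le_sum (f := fun j' => w₂ j' * karlinPayoff α (b j) (b j'))
    (fun j' _ => mul_nonneg (hw₂pos j').le (hu0 _ _)) (Finset.mem_univ j)
  simp only [hu2] at h4
  linarith
end

section
/- Let T ≥ 1, δ ∈ (0,1), and L ≥ 0, and define f : ℝ → ℝ by f(x) = −(L/2)x², so f′(x) = −Lx. Let x^1, x^2, … ∈ [−1,1] satisfy x^1 = 0 and, for each t ≥ 1, x^{t+1} = Π_{[−1,1]}[c^t] for some c^t lying in the real linear span of {x^1, …, x^t, f′(x^1), …, f′(x^t)} (the linear span assumption). Then x^t = 0 for all t, and the Φ_Proj(δ)-regret against the constant loss sequence f^1 = ⋯ = f^T = f satisfies sup_{v ∈ [−δ, δ]} ∑_{t=1}^T ( f(x^t) − f(Π_{[−1,1]}[x^t − v]) ) ≥ δ²LT/2. -/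
/-- The nearest-point projection of `ℝ` onto the interval `[−1, 1]`. -/
noncomputable def projIvl (z : ℝ) : ℝ := max (-1) (min 1 z)

/-- Let `T ≥ 1`, `δ ∈ (0,1)`, `L ≥ 0`, and `f(x) = −(L/2)x²`, so that
`f′(x) = −Lx`. If the iterates `x^t ∈ [−1,1]` satisfy `x^1 = 0` and the linear span
assumption `x^{t+1} = Π_{[−1,1]}[c^t]` with
`c^t ∈ span ℝ {x^1, …, x^t, f′(x^1), …, f′(x^t)}`, then `x^t = 0` for all `t ≥ 1` and the
`Φ_Proj(δ)`-regret against the constant loss sequence `f` is at least `δ²LT/2`: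
`sup_{v ∈ [−δ,δ]} ∑_{t=1}^T (f(x^t) − f(Π_{[−1,1]}[x^t − v])) ≥ δ²LT/2`. -/
theorem stmt_19 {T : ℕ} (hT : 1 ≤ T) {δ : ℝ} (hδ0 : 0 < δ) (hδ1 : δ < 1)
    {L : ℝ} (hL : 0 ≤ L)
    {x : ℕ → ℝ} (hx1 : x 1 = 0) (hxmem : ∀ t, 1 ≤ t → x t ∈ Set.Icc (-1 : ℝ) 1)
    (hspan : ∀ t, 1 ≤ t → ∃ c ∈ Submodule.span ℝ
      ((fun s => x s) '' Set.Icc 1 t ∪ (fun s => -(L * x s)) '' Set.Icc 1 t),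
      x (t + 1) = projIvl c) :
    (∀ t, 1 ≤ t → x t = 0) ∧
    δ ^ 2 * L * T / 2 ≤ ⨆ v : Set.Icc (-δ) δ,
      ∑ t ∈ Finset.Icc 1 T,
        (-(L / 2) * x t ^ 2 - -(L / 2) * projIvl (x t - (v : ℝ)) ^ 2) := by
  have h0 : ∀ t, 1 ≤ t → x t = 0 := by
    intro t
    induction t using Nat.strong_induction_on with
    | _ t ih =>
      intro ht
      rcases Nat.lt_or_ge 1 t with h | h
      · obtain ⟨s, rfl⟩ : ∃ s, t = s + 1 := ⟨t - 1, by omega⟩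
        obtain ⟨c, hc, hxc⟩ := hspan s (by omega)
        have hz : c = 0 := by
          have hle : Submodule.span ℝ ((fun s => x s) '' Set.Icc 1 s ∪
              (fun s => -(L * x s)) '' Set.Icc 1 s) ≤ (⊥ : Submodule ℝ ℝ) := by
            rw [Submodule.span_le]
            rintro y (⟨r, hr, rfl⟩ | ⟨r, hr, rfl⟩)
            · simp [ih r (by have := hr.2; omega) hr.1]
            · simp [ih r (by have := hr.2; omega) hr.1]
          simpa using hle hc
        rw [hxc, hz]
        simp [projIvl]
      · obtain rfl : t = 1 := by omega
        exact hx1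
  refine ⟨h0, ?_⟩
  have hsum : ∀ v : ℝ, ∑ t ∈ Finset.Icc 1 T,
      (-(L / 2) * x t ^ 2 - -(L / 2) * projIvl (x t - v) ^ 2)
      = T * ((L / 2) * projIvl (-v) ^ 2) := by
    intro v
    rw [Finset.sum_congr rfl (g := fun _ => (L / 2) * projIvl (-v) ^ 2)]
    · simp
    · intro t ht
      rw [h0 t (Finset.mem_Icc.mp ht).1]
      simp
  simp only [hsum]
  have hb : BddAbove (Set.range fun v : Set.Icc (-δ) δ =>
      (T : ℝ) * ((L / 2) * projIvl (-(v : ℝ)) ^ 2)) := by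
    refine ⟨T * ((L / 2) * 1), ?_⟩
    rintro _ ⟨v, rfl⟩
    have h1 : -1 ≤ projIvl (-(v : ℝ)) := le_max_left _ _
    have h2 : projIvl (-(v : ℝ)) ≤ 1 := max_le (by norm_num) (min_le_left _ _)
    have h3 : projIvl (-(v : ℝ)) ^ 2 ≤ 1 := by nlinarith
    dsimp only
    gcongr
  refine le_trans (le_of_eq ?_) (le_ciSup hb ⟨δ, by constructor <;> linarith⟩)
  have : projIvl (-δ) = -δ := by
    unfold projIvl
    rw [min_eq_right (by linarith), max_eq_right (by linarith)]
  simp only [this]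
  ring
end
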